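/- arXiv:math/0406201 — 3 statements merged into one kernel-verified Lean document; each statement's English description precedes it below -/
import Mathlib

section
/- There exists a₀ ∈ (0, 1/(2π)) such that for every a ∈ (0, a₀) there is a constant c_a < 1 with the following property: for every continuously differentiable 1-periodic function q : ℝ → ℝ, the function T_a q is continuously differentiable and sup_{x ∈ [0,1]} |(T_a q)'(x)| ≤ c_a · max( sup_{x ∈ [0,1]} |q(x)|, sup_{x ∈ [0,1]} |q'(x)| ). -/
/-!
Each inverse branch contributes the summand `(q / F') ∘ φ` to the transfer operator, and since
`φ' = 1 / F' ∘ φ` the derivative of this summand is `q' / F' ^ 2 - q F'' / F' ^ 3` evaluated at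
`φ x`. If `ρ ≤ F'` and `|F''| ≤ K`, the two branches together give
`‖(T q)'‖ ≤ 2 (1 / ρ ^ 2 + K / ρ ^ 3) ‖q‖_B`. For `F_a` one may take `ρ = 2 - 2 π |a|` and
`K = 4 π ^ 2 |a|`, and the resulting constant tends to `1 / 2` as `a → 0`. Since `F_a` maps
`[0, 1]` onto `[0, 2]`, only the values of `q` on `[0, 1]` matter on `[0, 1]`.
-/

open Set

section UnitSup

/-- The supremum of `|f|` over the unit interval, with the junk value `0` if it is infinite. -/
noncomputable def unitSup (f : ℝ → ℝ) : ℝ :=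
  sSup ((fun x => |f x|) '' Icc (0 : ℝ) 1)

/-- The `B`-norm of a `C¹` function on the circle, as a function of its values on the fundamental
domain `[0, 1]`; the function is not required to be periodic. -/
noncomputable def normB (q : ℝ → ℝ) : ℝ :=
  max (unitSup q) (unitSup (deriv q))

lemma abs_le_unitSup {f : ℝ → ℝ} (hf : ContinuousOn f (Icc 0 1)) {x : ℝ} (hx : x ∈ Icc 0 1) :
    |f x| ≤ unitSup f :=
  le_csSup (isCompact_Icc.image_of_continuousOn hf.abs).bddAbove (mem_image_of_mem _ hx)

lemma unitSup_le {f : ℝ → ℝ} {M : ℝ} (hf : ∀ x ∈ Icc (0 : ℝ) 1, |f x| ≤ M) : unitSup f ≤ M :=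
  csSup_le ((nonempty_Icc.2 zero_le_one).image _) (forall_mem_image.2 hf)

variable {q : ℝ → ℝ} {x : ℝ}

lemma abs_le_normB (hq : ContinuousOn q (Icc 0 1)) (hx : x ∈ Icc 0 1) : |q x| ≤ normB q :=
  (abs_le_unitSup hq hx).trans (le_max_left _ _)

lemma abs_deriv_le_normB (hq : ContinuousOn (deriv q) (Icc 0 1)) (hx : x ∈ Icc 0 1) :
    |deriv q x| ≤ normB q :=
  (abs_le_unitSup hq hx).trans (le_max_right _ _)

end UnitSup

section RightInverse

lemma mapsTo_Icc_of_rightInverse {α β : Type*} [LinearOrder α] [Preorder β]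
    {F : α → β} {φ : β → α} (hF : StrictMono F) (hφ : Function.RightInverse φ F) (a b : α) :
    MapsTo φ (Icc (F a) (F b)) (Icc a b) := fun x hx =>
  ⟨hF.le_iff_le.1 (hx.1.trans_eq (hφ x).symm), hF.le_iff_le.1 ((hφ x).trans_le hx.2)⟩

variable {F φ : ℝ → ℝ}

lemma hasDerivAt_of_rightInverse (hF : ContDiff ℝ 1 F) (hF' : ∀ x, 0 < deriv F x)
    (hφ : Function.RightInverse φ F) (x : ℝ) : HasDerivAt φ (deriv F (φ x))⁻¹ x := by
  have hleft : Function.LeftInverse φ F :=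
    hφ.rightInverse_of_injective (strictMono_of_deriv_pos hF').injective
  have hstrict : HasStrictDerivAt F (deriv F (φ x)) (φ x) :=
    hF.contDiffAt.hasStrictDerivAt one_ne_zero
  have h := hstrict.to_local_left_inverse (hF' _).ne' (.of_forall hleft)
  rw [hφ] at h
  exact h.hasDerivAt

lemma contDiff_one_of_rightInverse (hF : ContDiff ℝ 1 F) (hF' : ∀ x, 0 < deriv F x)
    (hφ : Function.RightInverse φ F) : ContDiff ℝ 1 φ := by
  have hderiv := hasDerivAt_of_rightInverse hF hF' hφ
  have hdiff : Differentiable ℝ φ := fun x => (hderiv x).differentiableAt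
  refine contDiff_one_iff_deriv.2 ⟨hdiff, ?_⟩
  rw [funext fun x => (hderiv x).deriv]
  exact ((hF.continuous_deriv le_rfl).comp hdiff.continuous).inv₀ fun x => (hF' _).ne'

end RightInverse

section TransferOperator

/-- The contribution of the inverse branch `φ` of `F` to the transfer operator of `F`. -/
noncomputable def transferBranch (F φ q : ℝ → ℝ) (x : ℝ) : ℝ :=
  q (φ x) / deriv F (φ x)

/-- The Perron–Frobenius operator of the degree-two circle map with lift `F`, where `φ = F⁻¹`: the
two preimages on the circle of the class of `x` are the classes of `φ x` and `φ (x + 1)`. -/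
noncomputable def transferOperator (F φ q : ℝ → ℝ) (x : ℝ) : ℝ :=
  transferBranch F φ q x + transferBranch F φ q (x + 1)

variable {F φ q : ℝ → ℝ}

lemma contDiff_transferBranch (hF : ContDiff ℝ 2 F) (hF' : ∀ x, 0 < deriv F x)
    (hφ : Function.RightInverse φ F) (hq : ContDiff ℝ 1 q) :
    ContDiff ℝ 1 (transferBranch F φ q) := by
  have hφ₁ : ContDiff ℝ 1 φ := contDiff_one_of_rightInverse (hF.of_le one_le_two) hF' hφ
  have hF₁ : ContDiff ℝ 1 (deriv F) := ContDiff.deriv' hF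
  exact (hq.comp hφ₁).div (hF₁.comp hφ₁) fun x => (hF' _).ne'

lemma contDiff_transferOperator (hF : ContDiff ℝ 2 F) (hF' : ∀ x, 0 < deriv F x)
    (hφ : Function.RightInverse φ F) (hq : ContDiff ℝ 1 q) :
    ContDiff ℝ 1 (transferOperator F φ q) :=
  have hbranch := contDiff_transferBranch hF hF' hφ hq
  hbranch.add (hbranch.comp (contDiff_id.add contDiff_const))

lemma hasDerivAt_transferBranch (hF : ContDiff ℝ 2 F) (hF' : ∀ x, 0 < deriv F x)
    (hφ : Function.RightInverse φ F) (hq : Differentiable ℝ q) (x : ℝ) :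
    HasDerivAt (transferBranch F φ q)
      (deriv q (φ x) / deriv F (φ x) ^ 2 -
        q (φ x) * deriv (deriv F) (φ x) / deriv F (φ x) ^ 3) x := by
  have hF₁ : Differentiable ℝ (deriv F) := (ContDiff.deriv' hF).differentiable one_ne_zero
  have hne : deriv F (φ x) ≠ 0 := (hF' _).ne'
  have hφ' := hasDerivAt_of_rightInverse (hF.of_le one_le_two) hF' hφ x
  have h := ((hq (φ x)).hasDerivAt.div (hF₁ (φ x)).hasDerivAt hne).comp x hφ'
  refine h.congr_deriv ?_
  field_simp

lemma deriv_transferOperator (hF : ContDiff ℝ 2 F) (hF' : ∀ x, 0 < deriv F x)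
    (hφ : Function.RightInverse φ F) (hq : Differentiable ℝ q) (x : ℝ) :
    deriv (transferOperator F φ q) x =
      deriv (transferBranch F φ q) x + deriv (transferBranch F φ q) (x + 1) := by
  have hbranch : Differentiable ℝ (transferBranch F φ q) := fun y =>
    (hasDerivAt_transferBranch hF hF' hφ hq y).differentiableAt
  exact ((hbranch x).hasDerivAt.add ((hbranch (x + 1)).hasDerivAt.comp_add_const x 1)).deriv

variable {ρ K : ℝ}

lemma abs_deriv_transferBranch_le {M x : ℝ} (hF : ContDiff ℝ 2 F) (hρ : 0 < ρ)
    (hF' : ∀ x, ρ ≤ deriv F x) (hF'' : |deriv (deriv F) (φ x)| ≤ K)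
    (hφ : Function.RightInverse φ F) (hq : Differentiable ℝ q) (hM : |q (φ x)| ≤ M)
    (hM' : |deriv q (φ x)| ≤ M) :
    |deriv (transferBranch F φ q) x| ≤ (1 / ρ ^ 2 + K / ρ ^ 3) * M := by
  have hpos : ∀ x, 0 < deriv F x := fun x => hρ.trans_le (hF' x)
  have hM₀ : 0 ≤ M := (abs_nonneg _).trans hM
  have hK : 0 ≤ K := (abs_nonneg _).trans hF''
  rw [(hasDerivAt_transferBranch hF hpos hφ hq x).deriv]
  calc _ ≤ |deriv q (φ x) / deriv F (φ x) ^ 2| +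
          |q (φ x) * deriv (deriv F) (φ x) / deriv F (φ x) ^ 3| := abs_sub _ _
    _ = |deriv q (φ x)| / deriv F (φ x) ^ 2 +
          |q (φ x)| * |deriv (deriv F) (φ x)| / deriv F (φ x) ^ 3 := by
      rw [abs_div, abs_div, abs_mul, abs_of_pos (pow_pos (hpos _) 2),
        abs_of_pos (pow_pos (hpos _) 3)]
    _ ≤ M / ρ ^ 2 + M * K / ρ ^ 3 := by
      gcongr <;> exact hF' _
    _ = (1 / ρ ^ 2 + K / ρ ^ 3) * M := by ring

theorem unitSup_deriv_transferOperator_le (hF : ContDiff ℝ 2 F) (hρ : 0 < ρ)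
    (hF' : ∀ x, ρ ≤ deriv F x) (hF'' : ∀ x ∈ Icc (0 : ℝ) 1, |deriv (deriv F) x| ≤ K)
    (h0 : F 0 = 0) (h1 : F 1 = 2) (hφ : Function.RightInverse φ F) (hq : ContDiff ℝ 1 q) :
    unitSup (deriv (transferOperator F φ q)) ≤ 2 * (1 / ρ ^ 2 + K / ρ ^ 3) * normB q := by
  have hpos : ∀ x, 0 < deriv F x := fun x => hρ.trans_le (hF' x)
  have hq' : Differentiable ℝ q := hq.differentiable one_ne_zero
  have hmaps : MapsTo φ (Icc 0 2) (Icc 0 1) := by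
    simpa only [h0, h1] using
      mapsTo_Icc_of_rightInverse (strictMono_of_deriv_pos hpos) hφ 0 1
  have hbranch : ∀ x ∈ Icc (0 : ℝ) 2,
      |deriv (transferBranch F φ q) x| ≤ (1 / ρ ^ 2 + K / ρ ^ 3) * normB q := fun x hx =>
    abs_deriv_transferBranch_le hF hρ hF' (hF'' _ (hmaps hx)) hφ hq'
      (abs_le_normB hq.continuous.continuousOn (hmaps hx))
      (abs_deriv_le_normB (hq.continuous_deriv le_rfl).continuousOn (hmaps hx))
  refine unitSup_le fun x ⟨hx0, hx1⟩ => ?_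
  rw [deriv_transferOperator hF hpos hφ hq']
  linarith [abs_add_le (deriv (transferBranch F φ q) x) (deriv (transferBranch F φ q) (x + 1)),
    hbranch x ⟨hx0, by linarith⟩, hbranch (x + 1) ⟨by linarith, by linarith⟩]

end TransferOperator

section SineDoubling

/-- The lift `F_a` of the perturbed doubling map of the circle. -/
noncomputable def sineDoubling (a x : ℝ) : ℝ :=
  2 * x + a * Real.sin (2 * Real.pi * x)

lemma contDiff_sineDoubling (a : ℝ) {n : WithTop ℕ∞} : ContDiff ℝ n (sineDoubling a) := by
  unfold sineDoubling
  fun_prop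

lemma deriv_sineDoubling (a : ℝ) :
    deriv (sineDoubling a) = fun x => 2 + 2 * Real.pi * a * Real.cos (2 * Real.pi * x) := by
  ext x
  have h := ((hasDerivAt_id x).const_mul 2).add
    (((hasDerivAt_id x).const_mul (2 * Real.pi)).sin.const_mul a)
  refine h.deriv.trans ?_
  simp only [id]
  ring

lemma deriv_deriv_sineDoubling (a : ℝ) :
    deriv (deriv (sineDoubling a)) =
      fun x => -(4 * Real.pi ^ 2 * a * Real.sin (2 * Real.pi * x)) := by
  ext x
  have h := (((hasDerivAt_id x).const_mul (2 * Real.pi)).cos.const_mul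
    (2 * Real.pi * a)).const_add 2
  rw [deriv_sineDoubling]
  refine h.deriv.trans ?_
  simp only [id]
  ring

lemma le_deriv_sineDoubling (a x : ℝ) :
    2 - 2 * Real.pi * |a| ≤ deriv (sineDoubling a) x := by
  have hcos : |2 * Real.pi * a * Real.cos (2 * Real.pi * x)| ≤ 2 * Real.pi * |a| := by
    rw [abs_mul, abs_mul, abs_of_pos Real.two_pi_pos]
    exact mul_le_of_le_one_right (by positivity) (Real.abs_cos_le_one _)
  rw [deriv_sineDoubling]
  linarith [neg_le_of_abs_le hcos]

lemma abs_deriv_deriv_sineDoubling_le (a x : ℝ) :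
    |deriv (deriv (sineDoubling a)) x| ≤ 4 * Real.pi ^ 2 * |a| := by
  rw [deriv_deriv_sineDoubling, abs_neg, abs_mul, abs_mul, abs_of_pos (by positivity)]
  exact mul_le_of_le_one_right (by positivity) (Real.abs_sin_le_one _)

/-- The contraction constant `c_a = 2 (1 / ρ ^ 2 + K / ρ ^ 3)` of the key estimate, for the bounds
`ρ = 2 - 2 π |a|` on `F_a'` and `K = 4 π ^ 2 |a|` on `F_a''`. -/
noncomputable def contractionConst (a : ℝ) : ℝ :=
  2 * (1 / (2 - 2 * Real.pi * |a|) ^ 2 + 4 * Real.pi ^ 2 * |a| / (2 - 2 * Real.pi * |a|) ^ 3)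

lemma eventually_contractionConst_lt_one : ∀ᶠ a in nhds 0, contractionConst a < 1 := by
  have hcont : ContinuousAt contractionConst 0 := by
    unfold contractionConst
    fun_prop (disch := norm_num)
  exact hcont.eventually_lt_const (by norm_num [contractionConst])

lemma unitSup_deriv_transferOperator_sineDoubling_le {a : ℝ} {φ q : ℝ → ℝ}
    (ha : 0 < 2 - 2 * Real.pi * |a|) (hφ : Function.RightInverse φ (sineDoubling a))
    (hq : ContDiff ℝ 1 q) :
    unitSup (deriv (transferOperator (sineDoubling a) φ q)) ≤ contractionConst a * normB q :=
  unitSup_deriv_transferOperator_le (contDiff_sineDoubling a) ha (le_deriv_sineDoubling a)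
    (fun x _ => abs_deriv_deriv_sineDoubling_le a x) (by simp [sineDoubling])
    (by simp [sineDoubling]) hφ hq

theorem stmt9_general :
    ∃ a₀ ∈ Ioo (0 : ℝ) (1 / (2 * Real.pi)), ∀ a, |a| < a₀ → ∃ c < 1, ∀ φ : ℝ → ℝ,
      Function.RightInverse φ (sineDoubling a) → ∀ q : ℝ → ℝ, ContDiff ℝ 1 q →
        ContDiff ℝ 1 (transferOperator (sineDoubling a) φ q) ∧
          unitSup (deriv (transferOperator (sineDoubling a) φ q)) ≤ c * normB q := by
  obtain ⟨ε, hε, hlt⟩ := Metric.eventually_nhds_iff.1 eventually_contractionConst_lt_one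
  obtain ⟨a₀, ha₀, hmin⟩ := exists_between (lt_min hε (one_div_pos.2 Real.two_pi_pos))
  obtain ⟨ha₀ε, ha₀π⟩ := lt_min_iff.1 hmin
  refine ⟨a₀, ⟨ha₀, ha₀π⟩, fun a ha => ⟨contractionConst a, hlt ?_, fun φ hφ q hq => ?_⟩⟩
  · simpa only [Real.dist_0_eq_abs] using ha.trans ha₀ε
  have hρ : 0 < 2 - 2 * Real.pi * |a| := by
    have := (lt_div_iff₀' Real.two_pi_pos).1 (ha.trans ha₀π)
    linarith
  have hderiv_pos : ∀ x, 0 < deriv (sineDoubling a) x := fun x =>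
    hρ.trans_le (le_deriv_sineDoubling a x)
  exact ⟨contDiff_transferOperator (contDiff_sineDoubling a) hderiv_pos hφ hq,
    unitSup_deriv_transferOperator_sineDoubling_le hρ hφ hq⟩

end SineDoubling

/-- Key estimate of Section 2.1: for sufficiently small `a`, there is `c_a < 1` such that
for every `C¹` 1-periodic `q`, the transfer-operator image `T_a q` is `C¹` and
`sup |(T_a q)'| ≤ c_a · max(sup |q|, sup |q'|)` on `[0,1]`. -/
theorem stmt9 :
    ∃ a₀ ∈ Set.Ioo (0:ℝ) (1/(2*Real.pi)), ∀ a ∈ Set.Ioo (0:ℝ) a₀,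
    ∃ c : ℝ, c < 1 ∧
    ∀ φ : ℝ → ℝ,
      (∀ x : ℝ, 2*(φ x) + a*Real.sin (2*Real.pi*(φ x)) = x) →
      (∀ x : ℝ, φ (2*x + a*Real.sin (2*Real.pi*x)) = x) →
    ∀ q : ℝ → ℝ, ContDiff ℝ 1 q → Function.Periodic q 1 →
      let F : ℝ → ℝ := fun x => 2*x + a*Real.sin (2*Real.pi*x)
      let Tq : ℝ → ℝ := fun x => q (φ x) / deriv F (φ x) + q (φ (x+1)) / deriv F (φ (x+1))
      ContDiff ℝ 1 Tq ∧
      sSup ((fun x => |deriv Tq x|) '' Set.Icc (0:ℝ) 1) ≤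
        c * max (sSup ((fun x => |q x|) '' Set.Icc (0:ℝ) 1))
                (sSup ((fun x => |deriv q x|) '' Set.Icc (0:ℝ) 1)) := by
  obtain ⟨a₀, ha₀, h⟩ := stmt9_general
  exact ⟨a₀, ha₀, fun a ha => (h a ((abs_of_pos ha.1).trans_lt ha.2)).imp fun c hc =>
    ⟨hc.1, fun φ hr _ q hq _ => hc.2 φ hr q hq⟩⟩
end

section
/- There exists a₀ ∈ (0, 1/(2π)) such that for every a ∈ (0, a₀) the following holds. Let f : ℝ/ℤ → ℝ/ℤ be the circle map induced by F_a(x) = 2x + a sin(2πx). Let ρ₀ be a nonconstant, three times continuously differentiable probability density on ℝ/ℤ whose measure μ₀ (Lebesgue measure with density ρ₀) satisfies μ₀ ∘ f⁻¹ = μ₀. For ε > 0 let ν_ε be the probability measure on ℝ/ℤ obtained as the pushforward, under the quotient map ℝ → ℝ/ℤ, of the uniform probability measure on [−ε, ε]. Then there exist constants c₁ > 0, c₂ > 0 and ε₁ > 0 such that: for every ε ∈ (0, ε₁) and every continuously differentiable probability density ρ_ε on ℝ/ℤ whose measure μ_ε satisfies (μ_ε ∘ f⁻¹) ∗ ν_ε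 = μ_ε (convolution of measures on ℝ/ℤ), one has c₁ ε² ≤ ∫_{ℝ/ℤ} |ρ_ε − ρ₀| ≤ c₂ ε². -/
open MeasureTheory

/-! Write `L` for the transfer operator of `f` and `A` for the averaging over the noise. The two
invariance equations say `L ρ₀ = ρ₀` and `A (L ρ_ε) = ρ_ε`, so `D = ρ_ε - ρ₀` solves
`D = A (L D) + (A ρ₀ - ρ₀)`. As the noise is centred, Taylor's formula shows that the source
`A ρ₀ - ρ₀` is `(v / 2) ρ₀''` up to third moments, where `v` is the variance of the noise, and that
its Lipschitz constant is `O(v)`. Since `A` and `L` do not increase the `L¹` norm, the source is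
bounded by `2 ‖D‖₁`, which gives the lower bound: `ρ₀''` does not vanish identically because
`ρ₀` is periodic and nonconstant. For the upper bound, `f` expands enough that `L` strictly
contracts the Lipschitz constant of functions of mean zero; hence the Lipschitz constant of `D`,
and with it `‖D‖₁`, is `O(v)`. -/

open Set Filter Topology
open scoped NNReal

/-! ### Densities and noise on the circle -/

instance isProbabilityMeasure_unitAddCircle :
    IsProbabilityMeasure (volume : Measure UnitAddCircle) :=
  ⟨UnitAddCircle.measure_univ⟩

lemma exists_coe_eq (z : UnitAddCircle) : ∃ x : ℝ, (x : UnitAddCircle) = z :=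
  QuotientAddGroup.mk_surjective z

lemma coe_add_natCast (x : ℝ) (n : ℕ) : ((x + n : ℝ) : UnitAddCircle) = x := by
  simpa using Function.Periodic.nat_mul (AddCircle.coe_add_period (1 : ℝ)) n x

lemma continuous_of_comp_coe {X : Type*} [TopologicalSpace X] {g : UnitAddCircle → X}
    (h : Continuous fun x : ℝ => g x) : Continuous g :=
  continuous_coinduced_dom.2 h

/-- The `1`-periodic function on the line lifting a function `ρ` on the circle; smoothness and
Lipschitz conditions on `ρ` are imposed on this lift. -/
abbrev circleLift (ρ : UnitAddCircle → ℝ) (x : ℝ) : ℝ := ρ x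

lemma periodic_circleLift (ρ : UnitAddCircle → ℝ) : (circleLift ρ).Periodic 1 := fun x => by
  rw [circleLift, AddCircle.coe_add_period]

lemma integral_circle_eq (ρ : UnitAddCircle → ℝ) :
    ∫ z, ρ z = ∫ x in (0 : ℝ)..1, circleLift ρ x := by
  simpa using (AddCircle.intervalIntegral_preimage 1 0 ρ).symm

lemma integrable_of_continuous {ρ : UnitAddCircle → ℝ} {μ : Measure UnitAddCircle}
    [IsFiniteMeasure μ] (hρ : Continuous ρ) : Integrable ρ μ :=
  hρ.integrable_of_hasCompactSupport (HasCompactSupport.of_compactSpace ρ)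

lemma abs_sub_le_of_lipschitzWith_circleLift {ρ : UnitAddCircle → ℝ} {M : ℝ≥0}
    (h : LipschitzWith M (circleLift ρ)) (z w : UnitAddCircle) : |ρ z - ρ w| ≤ M := by
  obtain ⟨x, hx, rfl⟩ : ∃ x ∈ Ico (0 : ℝ) (0 + 1), (x : UnitAddCircle) = z := by
    simpa using (AddCircle.coe_image_Ico_eq (1 : ℝ) 0).ge (mem_univ z)
  obtain ⟨y, hy, rfl⟩ : ∃ y ∈ Ico (0 : ℝ) (0 + 1), (y : UnitAddCircle) = w := by
    simpa using (AddCircle.coe_image_Ico_eq (1 : ℝ) 0).ge (mem_univ w)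
  have hxy : |x - y| ≤ 1 := abs_le.2 ⟨by linarith [hx.1, hy.2], by linarith [hx.2, hy.1]⟩
  exact (h.dist_le_mul x y).trans (mul_le_of_le_one_right M.coe_nonneg hxy)

lemma abs_le_of_integral_eq_zero {ρ : UnitAddCircle → ℝ} {M : ℝ≥0}
    (h : LipschitzWith M (circleLift ρ)) (h0 : ∫ w, ρ w = 0) (z : UnitAddCircle) : |ρ z| ≤ M := by
  have hρ : Continuous ρ := continuous_of_comp_coe h.continuous
  have hz : ∫ w, (ρ z - ρ w) = ρ z := by
    rw [integral_sub (integrable_const _) (integrable_of_continuous hρ), h0]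
    simp
  have hle : ‖∫ w, (ρ z - ρ w)‖ ≤ M * (volume : Measure UnitAddCircle).real univ :=
    norm_integral_le_of_norm_le_const <| .of_forall (abs_sub_le_of_lipschitzWith_circleLift h z)
  rwa [hz, probReal_univ, mul_one, Real.norm_eq_abs] at hle

/-- The measure on the circle with density `ρ` (for `ρ ≥ 0`; negative values count as `0`). -/
noncomputable def densityMeasure (ρ : UnitAddCircle → ℝ) : Measure UnitAddCircle :=
  volume.withDensity fun z => ENNReal.ofReal (ρ z)

lemma densityMeasure_univ {ρ : UnitAddCircle → ℝ} (hρ : Continuous ρ) (h0 : ∀ z, 0 ≤ ρ z) :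
    densityMeasure ρ univ = ENNReal.ofReal (∫ z, ρ z) := by
  rw [densityMeasure, withDensity_apply _ .univ, Measure.restrict_univ,
    ofReal_integral_eq_lintegral_ofReal (integrable_of_continuous hρ) (.of_forall h0)]

lemma isFiniteMeasure_densityMeasure {ρ : UnitAddCircle → ℝ} (hρ : Continuous ρ) :
    IsFiniteMeasure (densityMeasure ρ) :=
  isFiniteMeasure_withDensity_ofReal (integrable_of_continuous hρ).2

lemma lintegral_densityMeasure {ρ : UnitAddCircle → ℝ} (hρ : Continuous ρ)
    {ψ : UnitAddCircle → ENNReal} (hψ : Measurable ψ) :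
    ∫⁻ z, ψ z ∂densityMeasure ρ = ∫⁻ z, ENNReal.ofReal (ρ z) * ψ z :=
  lintegral_withDensity_eq_lintegral_mul _ hρ.measurable.ennreal_ofReal hψ

lemma densityMeasure_injective {ρ ρ' : UnitAddCircle → ℝ} (hρ : Continuous ρ)
    (hρ' : Continuous ρ') (h0 : ∀ z, 0 ≤ ρ z) (h0' : ∀ z, 0 ≤ ρ' z)
    (h : densityMeasure ρ = densityMeasure ρ') : ρ = ρ' := by
  have cρ : Continuous fun z => ENNReal.ofReal (ρ z) := ENNReal.continuous_ofReal.comp hρ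
  have cρ' : Continuous fun z => ENNReal.ofReal (ρ' z) := ENNReal.continuous_ofReal.comp hρ'
  have hfin : ∫⁻ z, ENNReal.ofReal (ρ z) ≠ ⊤ :=
    (integrable_of_continuous hρ).lintegral_lt_top.ne
  have hae := (withDensity_eq_iff cρ.aemeasurable cρ'.aemeasurable hfin).1 h
  have heq := (Continuous.ae_eq_iff_eq volume cρ cρ').1 hae
  exact funext fun z => (ENNReal.ofReal_eq_ofReal_iff (h0 z) (h0' z)).1 (congrFun heq z)

/-- The density of `Z + ξ` on the circle, when `Z` has density `ρ` and the independent noise `ξ`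
has law `ν`. -/
noncomputable def noiseAverage (ν : Measure UnitAddCircle) (ρ : UnitAddCircle → ℝ)
    (z : UnitAddCircle) : ℝ := ∫ w, ρ (z - w) ∂ν

section NoiseAverage

variable {ν : Measure UnitAddCircle} {ρ ρ' : UnitAddCircle → ℝ}

lemma integrable_comp_sub_left [IsFiniteMeasure ν] (hρ : Continuous ρ) (z : UnitAddCircle) :
    Integrable (fun w => ρ (z - w)) ν :=
  integrable_of_continuous (by fun_prop)

lemma continuous_noiseAverage [IsFiniteMeasure ν] (hρ : Continuous ρ) :
    Continuous (noiseAverage ν ρ) := by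
  have h := continuous_parametric_integral_of_continuous (μ := ν) (s := univ)
    (f := fun z w => ρ (z - w)) (by fun_prop) isCompact_univ
  rw [Measure.restrict_univ] at h
  exact h

lemma noiseAverage_nonneg (h0 : ∀ z, 0 ≤ ρ z) (z : UnitAddCircle) : 0 ≤ noiseAverage ν ρ z :=
  integral_nonneg fun _ => h0 _

lemma noiseAverage_sub [IsFiniteMeasure ν] (hρ : Continuous ρ) (hρ' : Continuous ρ') :
    noiseAverage ν (ρ - ρ') = noiseAverage ν ρ - noiseAverage ν ρ' :=
  funext fun z => integral_sub (integrable_comp_sub_left hρ z) (integrable_comp_sub_left hρ' z)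

lemma abs_noiseAverage_le (z : UnitAddCircle) : |noiseAverage ν ρ z| ≤ noiseAverage ν |ρ| z :=
  abs_integral_le_integral_abs

lemma lipschitzWith_noiseAverage [IsProbabilityMeasure ν] {M : ℝ≥0}
    (h : LipschitzWith M (circleLift ρ)) : LipschitzWith M (circleLift (noiseAverage ν ρ)) := by
  have hρ : Continuous ρ := continuous_of_comp_coe h.continuous
  refine LipschitzWith.of_dist_le_mul fun x y => ?_
  have hxy : ∀ w : UnitAddCircle, ‖ρ (x - w) - ρ (y - w)‖ ≤ M * dist x y := by
    intro w
    obtain ⟨t, rfl⟩ := exists_coe_eq w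
    exact (h.dist_le_mul (x - t) (y - t)).trans_eq (by rw [dist_sub_right])
  have hle := norm_integral_le_of_norm_le_const (μ := ν) (.of_forall hxy)
  rwa [integral_sub (integrable_comp_sub_left hρ x) (integrable_comp_sub_left hρ y), probReal_univ,
    mul_one] at hle

theorem densityMeasure_conv [IsFiniteMeasure ν] (hρ : Continuous ρ) (h0 : ∀ z, 0 ≤ ρ z) :
    densityMeasure ρ ∗ ν = densityMeasure (noiseAverage ν ρ) := by
  refine Measure.ext_of_lintegral _ fun ψ hψ => ?_
  have hswap : Measurable fun p : UnitAddCircle × UnitAddCircle =>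
      ENNReal.ofReal (ρ p.1) * ψ (p.1 + p.2) := by fun_prop
  have hswap' : Measurable fun p : UnitAddCircle × UnitAddCircle =>
      ENNReal.ofReal (ρ (p.2 - p.1)) * ψ p.2 := by
    have : Measurable ρ := hρ.measurable
    fun_prop
  rw [Measure.lintegral_conv hψ, lintegral_densityMeasure hρ (by fun_prop),
    lintegral_densityMeasure (continuous_noiseAverage hρ) hψ]
  calc ∫⁻ z, ENNReal.ofReal (ρ z) * ∫⁻ w, ψ (z + w) ∂ν
      = ∫⁻ z, ∫⁻ w, ENNReal.ofReal (ρ z) * ψ (z + w) ∂ν := by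
        congr with z
        rw [lintegral_const_mul _ (by fun_prop)]
    _ = ∫⁻ w, (∫⁻ z, ENNReal.ofReal (ρ z) * ψ (z + w)) ∂ν :=
        lintegral_lintegral_swap hswap.aemeasurable
    _ = ∫⁻ w, (∫⁻ z, ENNReal.ofReal (ρ (z - w)) * ψ z) ∂ν := by
        congr with w
        rw [← lintegral_sub_right_eq_self _ w]
        simp only [sub_add_cancel]
    _ = ∫⁻ z, ∫⁻ w, ENNReal.ofReal (ρ (z - w)) * ψ z ∂ν :=
        lintegral_lintegral_swap hswap'.aemeasurable
    _ = ∫⁻ z, ENNReal.ofReal (noiseAverage ν ρ z) * ψ z := by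
        congr with z
        have : Measurable ρ := hρ.measurable
        rw [lintegral_mul_const _ (by fun_prop), noiseAverage, ofReal_integral_eq_lintegral_ofReal
          (integrable_comp_sub_left hρ z) (.of_forall fun w => h0 _)]

lemma integral_noiseAverage [IsProbabilityMeasure ν] (hρ : Continuous ρ) (h0 : ∀ z, 0 ≤ ρ z) :
    ∫ z, noiseAverage ν ρ z = ∫ z, ρ z := by
  have hmass : (densityMeasure ρ ∗ ν) univ = densityMeasure ρ univ := by
    have := isFiniteMeasure_densityMeasure hρ
    rw [Measure.conv, Measure.map_apply (by fun_prop) .univ, preimage_univ, ← univ_prod_univ,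
      Measure.prod_prod, measure_univ (μ := ν), mul_one]
  rw [densityMeasure_conv hρ h0, densityMeasure_univ (continuous_noiseAverage hρ)
    (noiseAverage_nonneg h0), densityMeasure_univ hρ h0] at hmass
  exact (ENNReal.ofReal_eq_ofReal_iff (integral_nonneg (noiseAverage_nonneg h0))
    (integral_nonneg h0)).1 hmass

lemma integral_abs_noiseAverage_le [IsProbabilityMeasure ν] (hρ : Continuous ρ) :
    ∫ z, |noiseAverage ν ρ z| ≤ ∫ z, |ρ z| := by
  rw [← integral_noiseAverage (ν := ν) hρ.abs fun z => abs_nonneg (ρ z)]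
  exact integral_mono (integrable_of_continuous (continuous_noiseAverage hρ).abs)
    (integrable_of_continuous (continuous_noiseAverage hρ.abs)) fun z => abs_noiseAverage_le z

end NoiseAverage

/-! ### The transfer operator -/

lemma sum_range_shift_periodic {R : Type*} [AddCommMonoid R] {w : ℝ → R} {d : ℕ}
    (hw : w.Periodic d) : Function.Periodic (fun y => ∑ k ∈ Finset.range d, w (y + k)) 1 := by
  intro y
  have hshift : ∑ k ∈ Finset.range d, w (y + 1 + k) =
      ∑ k ∈ Finset.range d, w (y + (k + 1 : ℕ)) :=
    Finset.sum_congr rfl fun k _ => by rw [Nat.cast_succ, add_right_comm, add_assoc]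
  cases d with
  | zero => simp
  | succ n =>
    simp only [hshift]
    rw [Finset.sum_range_succ, Finset.sum_range_succ' _ n, hw y, Nat.cast_zero, add_zero]

lemma setLIntegral_Ioc_add_natCast {w : ℝ → ENNReal} (hw : Measurable w) (a : ℝ) (n : ℕ) :
    ∫⁻ y in Ioc a (a + n), w y = ∫⁻ y in Ioc a (a + 1), ∑ k ∈ Finset.range n, w (y + k) := by
  rw [lintegral_finsetSum _ fun k _ => by fun_prop]
  induction n with
  | zero => simp
  | succ n ih =>
    have htranslate : ∫⁻ y in Ioc (a + n) (a + (n + 1 : ℕ)), w y =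
        ∫⁻ y in Ioc a (a + 1), w (y + n) := by
      rw [← (measurePreserving_add_right volume (n : ℝ)).setLIntegral_comp_preimage
        measurableSet_Ioc hw, preimage_add_const_Ioc, add_sub_cancel_right, Nat.cast_succ,
        ← add_assoc, add_right_comm, add_sub_cancel_right]
    have hle : a + n ≤ a + (n + 1 : ℕ) := by gcongr; omega
    rw [← Ioc_union_Ioc_eq_Ioc (le_add_of_nonneg_right n.cast_nonneg) hle,
      lintegral_union measurableSet_Ioc (Ioc_disjoint_Ioc_of_le le_rfl), ih, htranslate,
      Finset.sum_range_succ]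

/-- An increasing lift to the line of a circle map `f` of degree `d`, with `C¹` inverse. -/
structure CoveringLift (f : UnitAddCircle → UnitAddCircle) (d : ℕ) where
  toOrderIso : ℝ ≃o ℝ
  coe_apply : ∀ x : ℝ, f x = (toOrderIso x : ℝ)
  map_add_one : ∀ x, toOrderIso (x + 1) = toOrderIso x + d
  contDiff_symm : ContDiff ℝ 1 toOrderIso.symm

namespace CoveringLift

variable {f : UnitAddCircle → UnitAddCircle} {d : ℕ} (E : CoveringLift f d)

/-- The inverse of the lift; its translates by `0, …, d - 1` lift the inverse branches of `f`. -/
def inverse (y : ℝ) : ℝ := E.toOrderIso.symm y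

lemma differentiable_inverse : Differentiable ℝ E.inverse :=
  E.contDiff_symm.differentiable one_ne_zero

lemma continuous_deriv_inverse : Continuous (deriv E.inverse) :=
  E.contDiff_symm.continuous_deriv le_rfl

lemma continuous_inverse : Continuous E.inverse :=
  E.differentiable_inverse.continuous

lemma deriv_inverse_nonneg (y : ℝ) : 0 ≤ deriv E.inverse y :=
  E.toOrderIso.symm.monotone.deriv_nonneg

lemma inverse_add (y : ℝ) : E.inverse (y + d) = E.inverse y + 1 := by
  rw [inverse, OrderIso.symm_apply_eq, map_add_one, inverse, OrderIso.apply_symm_apply]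

lemma deriv_inverse_periodic : (deriv E.inverse).Periodic d := fun y => by
  rw [← deriv_comp_add_const, funext E.inverse_add, deriv_add_const]

lemma apply_inverse (y : ℝ) : f (E.inverse y) = (y : UnitAddCircle) := by
  rw [E.coe_apply, inverse, OrderIso.apply_symm_apply]

include E in
lemma continuous_map : Continuous f := by
  refine continuous_of_comp_coe ?_
  simp only [E.coe_apply]
  exact (AddCircle.continuous_mk' 1).comp E.toOrderIso.continuous

lemma branch_periodic (ρ : UnitAddCircle → ℝ) :
    Function.Periodic (fun y => deriv E.inverse y * ρ (E.inverse y)) d := fun y => by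
  simp only [E.deriv_inverse_periodic y, E.inverse_add, AddCircle.coe_add_period]

/-- The transfer (Ruelle–Perron–Frobenius) operator of `f`: if `Z` has density `ρ`, then `f Z` has
density `E.transfer ρ`. -/
noncomputable def transfer (ρ : UnitAddCircle → ℝ) : UnitAddCircle → ℝ :=
  (sum_range_shift_periodic (E.branch_periodic ρ)).lift

variable {ρ ρ' : UnitAddCircle → ℝ}

lemma transfer_coe (ρ : UnitAddCircle → ℝ) (y : ℝ) : E.transfer ρ y =
    ∑ k ∈ Finset.range d, deriv E.inverse (y + k) * ρ (E.inverse (y + k)) :=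
  Function.Periodic.lift_coe _ y

lemma continuous_transfer (hρ : Continuous ρ) : Continuous (E.transfer ρ) := by
  refine continuous_of_comp_coe ?_
  have hG := E.continuous_inverse
  have hG' := E.continuous_deriv_inverse
  simp only [E.transfer_coe ρ]
  fun_prop

lemma transfer_nonneg (h0 : ∀ z, 0 ≤ ρ z) (z : UnitAddCircle) : 0 ≤ E.transfer ρ z := by
  obtain ⟨y, rfl⟩ := exists_coe_eq z
  exact (E.transfer_coe ρ y).symm ▸
    Finset.sum_nonneg fun k _ => mul_nonneg (E.deriv_inverse_nonneg _) (h0 _)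

lemma transfer_sub (ρ ρ' : UnitAddCircle → ℝ) :
    E.transfer (ρ - ρ') = E.transfer ρ - E.transfer ρ' := by
  ext z
  obtain ⟨y, rfl⟩ := exists_coe_eq z
  rw [Pi.sub_apply, transfer_coe, transfer_coe, transfer_coe]
  simp only [Pi.sub_apply, mul_sub, Finset.sum_sub_distrib]

lemma abs_transfer_le (z : UnitAddCircle) : |E.transfer ρ z| ≤ E.transfer |ρ| z := by
  obtain ⟨y, rfl⟩ := exists_coe_eq z
  rw [transfer_coe, transfer_coe]
  refine (Finset.abs_sum_le_sum_abs _ _).trans_eq (Finset.sum_congr rfl fun k _ => ?_)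
  rw [abs_mul, abs_of_nonneg (E.deriv_inverse_nonneg _), Pi.abs_apply]

lemma lintegral_comp_mul (ρ : UnitAddCircle → ℝ) (ψ : UnitAddCircle → ENNReal) :
    ∫⁻ z, ENNReal.ofReal (ρ z) * ψ (f z) =
      ∫⁻ y in Ioc (0 : ℝ) (0 + d),
        ENNReal.ofReal (deriv E.inverse y * ρ (E.inverse y)) * ψ y := by
  have himage : E.inverse '' Ioc 0 (0 + d) = Ioc (E.inverse 0) (E.inverse 0 + 1) := by
    rw [← E.inverse_add]
    exact E.toOrderIso.symm.image_Ioc _ _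
  rw [← UnitAddCircle.lintegral_preimage (E.inverse 0), ← himage,
    lintegral_image_eq_lintegral_abs_deriv_mul measurableSet_Ioc
      (fun y _ => (E.differentiable_inverse y).hasDerivAt.hasDerivWithinAt)
      E.toOrderIso.symm.injective.injOn]
  refine lintegral_congr fun y => ?_
  rw [abs_of_nonneg (E.deriv_inverse_nonneg y), E.apply_inverse,
    ENNReal.ofReal_mul (E.deriv_inverse_nonneg y), mul_assoc]

theorem map_densityMeasure (hρ : Continuous ρ) (h0 : ∀ z, 0 ≤ ρ z) :
    (densityMeasure ρ).map f = densityMeasure (E.transfer ρ) := by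
  have hf : Measurable f := E.continuous_map.measurable
  refine Measure.ext_of_lintegral _ fun ψ hψ => ?_
  have hbranch : Measurable fun y : ℝ =>
      ENNReal.ofReal (deriv E.inverse y * ρ (E.inverse y)) * ψ y := by
    have hG := E.continuous_inverse.measurable
    have hρm := hρ.measurable
    fun_prop
  rw [lintegral_map hψ hf, lintegral_densityMeasure (ψ := fun z => ψ (f z)) hρ (hψ.comp hf),
    lintegral_densityMeasure (E.continuous_transfer hρ) hψ,
    E.lintegral_comp_mul, setLIntegral_Ioc_add_natCast hbranch,
    ← UnitAddCircle.lintegral_preimage 0]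
  refine lintegral_congr fun y => ?_
  rw [E.transfer_coe, ENNReal.ofReal_sum_of_nonneg fun k _ =>
    mul_nonneg (E.deriv_inverse_nonneg _) (h0 _), Finset.sum_mul]
  exact Finset.sum_congr rfl fun k _ => by rw [coe_add_natCast]

lemma integral_transfer (hρ : Continuous ρ) (h0 : ∀ z, 0 ≤ ρ z) :
    ∫ z, E.transfer ρ z = ∫ z, ρ z := by
  have hmass : (densityMeasure ρ).map f univ = densityMeasure ρ univ := by
    rw [Measure.map_apply E.continuous_map.measurable .univ, preimage_univ]
  rw [E.map_densityMeasure hρ h0, densityMeasure_univ (E.continuous_transfer hρ)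
    (E.transfer_nonneg h0), densityMeasure_univ hρ h0] at hmass
  exact (ENNReal.ofReal_eq_ofReal_iff (integral_nonneg (E.transfer_nonneg h0))
    (integral_nonneg h0)).1 hmass

lemma integral_abs_transfer_le (hρ : Continuous ρ) : ∫ z, |E.transfer ρ z| ≤ ∫ z, |ρ z| := by
  rw [← E.integral_transfer hρ.abs fun z => abs_nonneg (ρ z)]
  exact integral_mono (integrable_of_continuous (E.continuous_transfer hρ).abs)
    (integrable_of_continuous (E.continuous_transfer hρ.abs)) fun z => E.abs_transfer_le z

-- As `ρ` has mean zero, its Lipschitz constant also bounds `|ρ|`, which multiplies the variation of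
-- the weights `deriv E.inverse`.
lemma lipschitzWith_transfer {γ δ M : ℝ≥0} (hG : LipschitzWith γ E.inverse)
    (hG' : LipschitzWith δ (deriv E.inverse)) (h : LipschitzWith M (circleLift ρ))
    (hint : ∫ z, ρ z = 0) :
    LipschitzWith (d * (δ + γ ^ 2) * M) (circleLift (E.transfer ρ)) := by
  have hbranch : ∀ y y' : ℝ, |deriv E.inverse y * ρ (E.inverse y) -
      deriv E.inverse y' * ρ (E.inverse y')| ≤ (δ + γ ^ 2) * M * |y - y'| := fun y y' => by
    have hweight : |deriv E.inverse y - deriv E.inverse y'| ≤ δ * |y - y'| := hG'.dist_le_mul y y'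
    have hvalue : |ρ (E.inverse y) - ρ (E.inverse y')| ≤ M * (γ * |y - y'|) :=
      (h.dist_le_mul _ _).trans (by gcongr; exact hG.dist_le_mul y y')
    have hslope : |deriv E.inverse y'| ≤ γ := norm_deriv_le_of_lipschitz hG
    calc |deriv E.inverse y * ρ (E.inverse y) - deriv E.inverse y' * ρ (E.inverse y')|
        = |(deriv E.inverse y - deriv E.inverse y') * ρ (E.inverse y) +
            deriv E.inverse y' * (ρ (E.inverse y) - ρ (E.inverse y'))| := by ring_nf
      _ ≤ |deriv E.inverse y - deriv E.inverse y'| * |ρ (E.inverse y)| +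
            |deriv E.inverse y'| * |ρ (E.inverse y) - ρ (E.inverse y')| := by
          exact (abs_add_le _ _).trans_eq (by rw [abs_mul, abs_mul])
      _ ≤ δ * |y - y'| * M + γ * (M * (γ * |y - y'|)) := by
          gcongr
          exact abs_le_of_integral_eq_zero h hint _
      _ = (δ + γ ^ 2) * M * |y - y'| := by ring
  refine LipschitzWith.of_dist_le_mul fun y y' => ?_
  rw [Real.dist_eq, Real.dist_eq, circleLift, circleLift, E.transfer_coe, E.transfer_coe,
    ← Finset.sum_sub_distrib]
  calc _ ≤ ∑ _k ∈ Finset.range d, (δ + γ ^ 2) * M * |y - y'| :=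
        (Finset.abs_sum_le_sum_abs _ _).trans <| Finset.sum_le_sum fun k _ =>
          (hbranch _ _).trans_eq (by rw [add_sub_add_right_eq_sub])
    _ = _ := by
        rw [Finset.sum_const, Finset.card_range, nsmul_eq_mul]
        push_cast
        ring

end CoveringLift

/-! ### Inverses of expanding lifts -/

section OrderIsoInverse

variable {e : ℝ ≃o ℝ}

lemma hasDerivAt_orderIso_symm (he : Differentiable ℝ e) (hne : ∀ x, deriv e x ≠ 0) (y : ℝ) :
    HasDerivAt e.symm (deriv e (e.symm y))⁻¹ y :=
  (he (e.symm y)).hasDerivAt.of_local_left_inverse e.symm.continuous.continuousAt (hne _)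
    (.of_forall e.apply_symm_apply)

lemma deriv_orderIso_symm (he : Differentiable ℝ e) (hne : ∀ x, deriv e x ≠ 0) :
    deriv e.symm = fun y => (deriv e (e.symm y))⁻¹ :=
  funext fun y => (hasDerivAt_orderIso_symm he hne y).deriv

lemma contDiff_orderIso_symm (he : ContDiff ℝ 1 e) (hne : ∀ x, deriv e x ≠ 0) :
    ContDiff ℝ 1 e.symm := by
  have hd : Differentiable ℝ e := he.differentiable one_ne_zero
  have hcont : Continuous fun y => (deriv e (e.symm y))⁻¹ :=
    ((he.continuous_deriv le_rfl).comp e.symm.continuous).inv₀ fun _ => hne _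
  exact contDiff_one_iff_deriv.2 ⟨fun y => (hasDerivAt_orderIso_symm hd hne y).differentiableAt,
    (deriv_orderIso_symm hd hne).symm ▸ hcont⟩

variable {lam Λ : ℝ≥0}

lemma lipschitzWith_orderIso_symm (he : Differentiable ℝ e) (hlam : 0 < lam)
    (hexp : ∀ x, lam ≤ deriv e x) : LipschitzWith lam⁻¹ e.symm := by
  have hpos : ∀ x, 0 < deriv e x := fun x => (NNReal.coe_pos.2 hlam).trans_le (hexp x)
  have hsymm := hasDerivAt_orderIso_symm he fun x => (hpos x).ne'
  refine lipschitzWith_of_nnnorm_deriv_le (fun y => (hsymm y).differentiableAt) fun y => ?_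
  rw [(hsymm y).deriv, ← NNReal.coe_le_coe, coe_nnnorm, norm_inv, Real.norm_of_nonneg (hpos _).le,
    NNReal.coe_inv]
  exact inv_anti₀ (NNReal.coe_pos.2 hlam) (hexp _)

lemma lipschitzWith_deriv_orderIso_symm (he : Differentiable ℝ e) (hlam : 0 < lam)
    (hexp : ∀ x, lam ≤ deriv e x) (hlip : LipschitzWith Λ (deriv e)) :
    LipschitzWith (Λ / lam ^ 3) (deriv e.symm) := by
  have hlam' : (0 : ℝ) < lam := hlam
  have hpos : ∀ x, 0 < deriv e x := fun x => hlam'.trans_le (hexp x)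
  rw [deriv_orderIso_symm he fun x => (hpos x).ne']
  refine LipschitzWith.of_dist_le_mul fun y y' => ?_
  set p := deriv e (e.symm y)
  set q := deriv e (e.symm y')
  have hnum : |q - p| ≤ Λ * (lam⁻¹ * |y - y'|) := by
    rw [abs_sub_comm]
    refine (hlip.dist_le_mul _ _).trans ?_
    gcongr
    exact (lipschitzWith_orderIso_symm he hlam hexp).dist_le_mul y y'
  have hden : (lam : ℝ) ^ 2 ≤ p * q := by
    rw [sq]
    exact mul_le_mul (hexp _) (hexp _) hlam'.le (hpos _).le
  calc |p⁻¹ - q⁻¹| = |q - p| / (p * q) := by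
        rw [inv_sub_inv (hpos _).ne' (hpos _).ne', abs_div, abs_of_pos (mul_pos (hpos _) (hpos _))]
    _ ≤ Λ * (lam⁻¹ * |y - y'|) / lam ^ 2 := by gcongr
    _ = (Λ / lam ^ 3 : ℝ≥0) * |y - y'| := by
        push_cast
        field_simp

end OrderIsoInverse

lemma exists_orderIso_eq_of_le_deriv {F : ℝ → ℝ} {lam : ℝ≥0} (hF : Differentiable ℝ F)
    (hlam : 0 < lam) (hexp : ∀ x, lam ≤ deriv F x) : ∃ e : ℝ ≃o ℝ, ⇑e = F := by
  have hlam' : (0 : ℝ) < lam := hlam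
  have hmono : StrictMono F := strictMono_of_deriv_pos fun x => hlam'.trans_le (hexp x)
  have hgrowth : ∀ x y, x ≤ y → lam * (y - x) ≤ F y - F x := fun _ _ h =>
    mul_sub_le_image_sub_of_le_deriv hF hexp h
  have htop : Tendsto F atTop atTop := by
    refine tendsto_atTop_mono' _ ?_
      (tendsto_atTop_add_const_right _ (F 0) (tendsto_id.const_mul_atTop hlam'))
    filter_upwards [eventually_ge_atTop 0] with x hx
    have := hgrowth 0 x hx
    simp only [id]; linarith
  have hbot : Tendsto F atBot atBot := by
    refine tendsto_atBot_mono' _ ?_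
      (tendsto_atBot_add_const_right _ (F 0) (tendsto_id.const_mul_atBot hlam'))
    filter_upwards [eventually_le_atBot 0] with x hx
    have := hgrowth x 0 hx
    simp only [id]; linarith
  exact ⟨hmono.orderIsoOfSurjective F (hF.continuous.surjective htop hbot), rfl⟩

theorem exists_coveringLift {f : UnitAddCircle → UnitAddCircle} {F : ℝ → ℝ} {d : ℕ}
    {lam Λ : ℝ≥0} (hf : ∀ x : ℝ, f x = F x) (hF : ContDiff ℝ 1 F) (hdeg : ∀ x, F (x + 1) = F x + d)
    (hlam : 0 < lam) (hexp : ∀ x, lam ≤ deriv F x) (hlip : LipschitzWith Λ (deriv F)) :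
    ∃ E : CoveringLift f d,
      LipschitzWith lam⁻¹ E.inverse ∧ LipschitzWith (Λ / lam ^ 3) (deriv E.inverse) := by
  have hd : Differentiable ℝ F := hF.differentiable one_ne_zero
  have hne : ∀ x, deriv F x ≠ 0 := fun x => ((NNReal.coe_pos.2 hlam).trans_le (hexp x)).ne'
  obtain ⟨e, rfl⟩ := exists_orderIso_eq_of_le_deriv hd hlam hexp
  exact ⟨⟨e, hf, hdeg, contDiff_orderIso_symm hF hne⟩, lipschitzWith_orderIso_symm hd hlam hexp,
    lipschitzWith_deriv_orderIso_symm hd hlam hexp hlip⟩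

/-! ### Taylor expansion of the noise average -/

lemma abs_le_mul_pow_succ_of_hasDerivAt {q q' : ℝ → ℝ} {C : ℝ} {n : ℕ} (hq0 : q 0 = 0)
    (hq : ∀ t, HasDerivAt q (q' t) t) (hC : ∀ t, |q' t| ≤ C * |t| ^ n) (t : ℝ) :
    |q t| ≤ C * |t| ^ (n + 1) := by
  have hC0 : 0 ≤ C := by simpa using (abs_nonneg _).trans (hC 1)
  have hbound : ∀ s ∈ Icc (-|t|) |t|, ‖q' s‖ ≤ C * |t| ^ n := fun s hs =>
    (hC s).trans <| by have := abs_le.2 hs; gcongr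
  have hmvt := (convex_Icc (-|t|) |t|).norm_image_sub_le_of_norm_hasDerivWithin_le
    (fun s _ => (hq s).hasDerivWithinAt) hbound (x := 0) (y := t) ⟨by simp, by simp⟩
    ⟨neg_abs_le t, le_abs_self t⟩
  simpa only [hq0, sub_zero, Real.norm_eq_abs, pow_succ, mul_assoc] using hmvt

section Taylor

variable {P P' P'' P''' : ℝ → ℝ} {K : ℝ} (h : ∀ x, HasDerivAt P (P' x) x)
  (h' : ∀ x, HasDerivAt P' (P'' x) x) (h'' : ∀ x, HasDerivAt P'' (P''' x) x)
include h

lemma abs_sub_le_of_hasDerivAt (hK : ∀ x, |P' x| ≤ K) (x t : ℝ) : |P (x + t) - P x| ≤ K * |t| := by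
  simpa using abs_le_mul_pow_succ_of_hasDerivAt (n := 0) (q := fun t => P (x + t) - P x)
    (by simp) (fun t => ((h (x + t)).comp_const_add x t).sub_const _) (by simpa using fun t => hK _)
    t

include h'

lemma abs_taylor_one_remainder_le (hK : ∀ x, |P'' x| ≤ K) (x t : ℝ) :
    |P (x + t) - P x - t * P' x| ≤ K * |t| ^ 2 :=
  abs_le_mul_pow_succ_of_hasDerivAt (n := 1) (q := fun t => P (x + t) - P x - t * P' x)
    (by simp) (fun t => (((h (x + t)).comp_const_add x t).sub_const _).sub
      (hasDerivAt_mul_const (P' x)))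
    (fun t => by simpa only [pow_one] using abs_sub_le_of_hasDerivAt h' hK x t) t

include h''

lemma abs_taylor_two_remainder_le (hK : ∀ x, |P''' x| ≤ K) (x t : ℝ) :
    |P (x + t) - P x - t * P' x - t ^ 2 / 2 * P'' x| ≤ K * |t| ^ 3 := by
  have hsq : ∀ t, HasDerivAt (fun t : ℝ => t ^ 2 / 2 * P'' x) (t * P'' x) t := fun t => by
    simpa using (((hasDerivAt_pow 2 t).div_const 2).mul_const (P'' x))
  exact abs_le_mul_pow_succ_of_hasDerivAt (n := 2)
    (q := fun t => P (x + t) - P x - t * P' x - t ^ 2 / 2 * P'' x) (by simp)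
    (fun t => ((((h (x + t)).comp_const_add x t).sub_const _).sub
      (hasDerivAt_mul_const (P' x))).sub (hsq t))
    (abs_taylor_one_remainder_le h' h'' hK x) t

lemma abs_taylor_one_remainder_sub_le (hK : ∀ x, |P''' x| ≤ K) (t x y : ℝ) :
    |(P (x + t) - P x - t * P' x) - (P (y + t) - P y - t * P' y)| ≤ K * |t| ^ 2 * |x - y| := by
  simpa using convex_univ.norm_image_sub_le_of_norm_hasDerivWithin_le
    (f := fun x => P (x + t) - P x - t * P' x)
    (fun x _ => ((((h (x + t)).comp_add_const x t).sub (h x)).sub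
      ((h' x).const_mul t)).hasDerivWithinAt)
    (fun x _ => abs_taylor_one_remainder_le h' h'' hK x t) (mem_univ y) (mem_univ x)

end Taylor

lemma hasDerivAt_iteratedDeriv {P : ℝ → ℝ} {n : WithTop ℕ∞} {m : ℕ} (h : ContDiff ℝ n P)
    (hm : m < n) (x : ℝ) : HasDerivAt (iteratedDeriv m P) (iteratedDeriv (m + 1) P x) x := by
  rw [iteratedDeriv_succ]
  exact (h.differentiable_iteratedDeriv m hm x).hasDerivAt

lemma periodic_iteratedDeriv {P : ℝ → ℝ} {c : ℝ} (h : P.Periodic c) (n : ℕ) :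
    (iteratedDeriv n P).Periodic c := fun x => by
  rw [← congrFun (iteratedDeriv_comp_add_const n P c) x, funext h]

lemma exists_abs_iteratedDeriv_le {P : ℝ → ℝ} {n : ℕ} (h : ContDiff ℝ n P) (hP : P.Periodic 1) :
    ∃ K : ℝ≥0, ∀ x, |iteratedDeriv n P x| ≤ K := by
  obtain ⟨K, hK⟩ := (periodic_iteratedDeriv hP n).isBounded_of_continuous one_ne_zero
    (h.continuous_iteratedDeriv n le_rfl) |>.exists_norm_le
  exact ⟨K.toNNReal, fun x => (hK _ (mem_range_self x)).trans (Real.le_coe_toNNReal K)⟩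

lemma continuous_of_hasDerivAt_circleLift {ρ : UnitAddCircle → ℝ} {ρ' : ℝ → ℝ}
    (h : ∀ x, HasDerivAt (circleLift ρ) (ρ' x) x) : Continuous ρ :=
  continuous_of_comp_coe (continuous_iff_continuousAt.2 fun x => (h x).continuousAt)

section NoiseExpansion

/-- The law on the circle of a real random variable with law `ν`, reduced modulo `1`. -/
noncomputable def circleLaw (ν : Measure ℝ) : Measure UnitAddCircle :=
  ν.map fun t : ℝ => (t : UnitAddCircle)

variable {ν : Measure ℝ} {ρ : UnitAddCircle → ℝ}

instance isProbabilityMeasure_circleLaw [IsProbabilityMeasure ν] :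
    IsProbabilityMeasure (circleLaw ν) :=
  Measure.isProbabilityMeasure_map (AddCircle.measurable_mk' (a := (1 : ℝ))).aemeasurable

lemma noiseAverage_circleLaw_coe (hρ : Continuous ρ) (x : ℝ) :
    noiseAverage (circleLaw ν) ρ x = ∫ t, circleLift ρ (x - t) ∂ν :=
  integral_map AddCircle.measurable_mk'.aemeasurable
    (by fun_prop : Continuous fun w => ρ (x - w)).aestronglyMeasurable

lemma integrable_abs_pow_of_memLp [IsFiniteMeasure ν] {n m : ℕ} (hν : MemLp id n ν)
    (hm : m ≤ n) : Integrable (fun t => |t| ^ m) ν :=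
  (hν.mono_exponent (by exact_mod_cast hm)).integrable_norm_pow'

variable [IsProbabilityMeasure ν]

lemma integrable_circleLift_comp_sub (hρ : Continuous ρ) (x : ℝ) :
    Integrable (fun t => circleLift ρ (x - t)) ν :=
  (integrable_comp_sub_left (ν := circleLaw ν) hρ x).comp_measurable AddCircle.measurable_mk'

lemma integrable_taylor_one (hρ : Continuous ρ) (hν : MemLp id 1 ν) (b x : ℝ) :
    Integrable (fun t => circleLift ρ (x + -t) - circleLift ρ x - -t * b) ν :=
  ((integrable_circleLift_comp_sub hρ x).sub (integrable_const _)).sub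
    ((memLp_one_iff_integrable.1 hν).neg.mul_const b)

lemma noiseAverage_sub_eq_integral_taylor_one (hρ : Continuous ρ) (hν : MemLp id 1 ν)
    (hmean : ∫ t, t ∂ν = 0) (b x : ℝ) :
    noiseAverage (circleLaw ν) ρ x - ρ x =
      ∫ t, (circleLift ρ (x + -t) - circleLift ρ x - -t * b) ∂ν := by
  have hint : Integrable (fun t => circleLift ρ (x + -t)) ν := integrable_circleLift_comp_sub hρ x
  have hneg : Integrable (fun t : ℝ => -t) ν := (memLp_one_iff_integrable.1 hν).neg
  have hsub : Integrable (fun t => circleLift ρ (x + -t) - circleLift ρ x) ν :=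
    hint.sub (integrable_const _)
  rw [integral_sub hsub (hneg.mul_const b), integral_sub hint (integrable_const _),
    integral_mul_const, integral_neg, hmean, noiseAverage_circleLaw_coe hρ]
  simp [sub_eq_add_neg]

variable {ρ' ρ'' ρ''' : ℝ → ℝ} {K : ℝ≥0} (h : ∀ x, HasDerivAt (circleLift ρ) (ρ' x) x)
  (h' : ∀ x, HasDerivAt ρ' (ρ'' x) x) (h'' : ∀ x, HasDerivAt ρ'' (ρ''' x) x)
  (hK : ∀ x, |ρ''' x| ≤ K)
include h h' h'' hK

-- The drift term of the Taylor expansion of `ρ (x - t)` averages out because the noise is centred.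
lemma abs_noiseAverage_sub_taylor_two_le (hν : MemLp id 3 ν) (hmean : ∫ t, t ∂ν = 0) (x : ℝ) :
    |noiseAverage (circleLaw ν) ρ x - ρ x -
      (∫ t, t ^ 2 ∂ν) / 2 * ρ'' x| ≤ K * ∫ t, |t| ^ 3 ∂ν := by
  have hρ : Continuous ρ := continuous_of_hasDerivAt_circleLift h
  have hν1 : MemLp id 1 ν := hν.mono_exponent (by norm_num)
  have hsq : Integrable (fun t : ℝ => t ^ 2) ν := by
    simpa using integrable_abs_pow_of_memLp (m := 2) (n := 3) hν (by norm_num)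
  have htaylor := abs_taylor_two_remainder_le h h' h'' hK x
  rw [noiseAverage_sub_eq_integral_taylor_one hρ hν1 hmean (ρ' x),
    ← integral_div, ← integral_mul_const, ← integral_sub (integrable_taylor_one hρ hν1 _ x)
    ((hsq.div_const 2).mul_const _), ← integral_const_mul, ← Real.norm_eq_abs]
  refine norm_integral_le_of_norm_le ((integrable_abs_pow_of_memLp hν le_rfl).const_mul _)
    (.of_forall fun t => ?_)
  simpa using htaylor (-t)

lemma lipschitzWith_noiseAverage_sub (hν : MemLp id 2 ν) (hmean : ∫ t, t ∂ν = 0) :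
    LipschitzWith (K * (∫ t, t ^ 2 ∂ν).toNNReal)
      (circleLift (noiseAverage (circleLaw ν) ρ - ρ)) := by
  have hρ : Continuous ρ := continuous_of_hasDerivAt_circleLift h
  have hν1 : MemLp id 1 ν := hν.mono_exponent (by norm_num)
  have hsq : Integrable (fun t : ℝ => t ^ 2) ν := by
    simpa using integrable_abs_pow_of_memLp (m := 2) (n := 2) hν le_rfl
  have htaylor := abs_taylor_one_remainder_sub_le h h' h'' hK
  refine LipschitzWith.of_dist_le_mul fun x y => ?_
  rw [Real.dist_eq, circleLift, circleLift, Pi.sub_apply, Pi.sub_apply,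
    noiseAverage_sub_eq_integral_taylor_one hρ hν1 hmean (ρ' x),
    noiseAverage_sub_eq_integral_taylor_one hρ hν1 hmean (ρ' y),
    ← integral_sub (integrable_taylor_one hρ hν1 _ x) (integrable_taylor_one hρ hν1 _ y),
    ← Real.norm_eq_abs]
  refine (norm_integral_le_of_norm_le ((hsq.const_mul K).mul_const |x - y|)
    (.of_forall fun t => ?_)).trans_eq ?_
  · simpa using htaylor (-t) x y
  · rw [integral_mul_const, integral_const_mul, NNReal.coe_mul,
      Real.coe_toNNReal _ (integral_nonneg fun t => sq_nonneg t), Real.dist_eq]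

lemma le_integral_abs_noiseAverage_sub (hν : MemLp id 3 ν) (hmean : ∫ t, t ∂ν = 0) :
    (∫ t, t ^ 2 ∂ν) / 2 * (∫ x in (0 : ℝ)..1, |ρ'' x|) - K * ∫ t, |t| ^ 3 ∂ν ≤
      ∫ z, |(noiseAverage (circleLaw ν) ρ - ρ) z| := by
  set v := ∫ t, t ^ 2 ∂ν
  set m := ∫ t, |t| ^ 3 ∂ν
  have hpoint : ∀ x : ℝ,
      v / 2 * |ρ'' x| - K * m ≤ |circleLift (noiseAverage (circleLaw ν) ρ - ρ) x| := fun x => by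
    have hv : 0 ≤ v / 2 := div_nonneg (integral_nonneg fun t => sq_nonneg t) zero_le_two
    have herr := abs_noiseAverage_sub_taylor_two_le h h' h'' hK hν hmean x
    have htri := abs_sub_abs_le_abs_sub (v / 2 * ρ'' x) (noiseAverage (circleLaw ν) ρ x - ρ x)
    rw [abs_mul, abs_of_nonneg hv, abs_sub_comm (v / 2 * ρ'' x)] at htri
    simp only [circleLift, Pi.sub_apply]
    linarith
  have hρ : Continuous ρ := continuous_of_hasDerivAt_circleLift h
  have hρ'' : Continuous ρ'' := continuous_iff_continuousAt.2 fun x => (h'' x).continuousAt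
  have hmain : Continuous fun x => v / 2 * |ρ'' x| := by fun_prop
  have hdiff : Continuous (circleLift (noiseAverage (circleLaw ν) ρ - ρ)) :=
    ((continuous_noiseAverage hρ).sub hρ).comp (AddCircle.continuous_mk' 1)
  calc v / 2 * (∫ x in (0 : ℝ)..1, |ρ'' x|) - K * m
      = ∫ x in (0 : ℝ)..1, (v / 2 * |ρ'' x| - K * m) := by
        rw [intervalIntegral.integral_sub (hmain.intervalIntegrable _ _) (by simp),
          intervalIntegral.integral_const_mul]
        simp
    _ ≤ ∫ x in (0 : ℝ)..1, |circleLift (noiseAverage (circleLaw ν) ρ - ρ) x| :=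
        intervalIntegral.integral_mono zero_le_one
          ((hmain.sub continuous_const).intervalIntegrable _ _)
          (hdiff.abs.intervalIntegrable _ _) hpoint
    _ = ∫ z, |(noiseAverage (circleLaw ν) ρ - ρ) z| :=
        (integral_circle_eq fun z => |(noiseAverage (circleLaw ν) ρ - ρ) z|).symm

end NoiseExpansion

/-! ### Two-sided bounds on the change of density -/

lemma eq_of_periodic_of_iteratedDeriv_two_eq_zero {P : ℝ → ℝ} {c : ℝ} (hP : ContDiff ℝ 2 P)
    (hper : P.Periodic c) (hc : 0 < c) (h : ∀ x, iteratedDeriv 2 P x = 0) (x y : ℝ) :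
    P x = P y := by
  obtain ⟨s, -, hs⟩ : ∃ s ∈ Ioo 0 c, deriv P s = 0 :=
    exists_deriv_eq_zero hc hP.continuous.continuousOn (by simpa using (hper 0).symm)
  have hd : Differentiable ℝ (deriv P) := by
    simpa only [iteratedDeriv_one] using hP.differentiable_iteratedDeriv 1 (by norm_num)
  have hslope : ∀ t, deriv P t = 0 := fun t => by
    rw [← hs, is_const_of_deriv_eq_zero hd (fun u => by
      simpa only [iteratedDeriv_succ, iteratedDeriv_zero] using h u) t s]
  exact is_const_of_deriv_eq_zero (hP.differentiable two_ne_zero) hslope x y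

lemma integral_abs_iteratedDeriv_two_pos {P : ℝ → ℝ} {c : ℝ} (hP : ContDiff ℝ 2 P)
    (hper : P.Periodic c) (hc : 0 < c) (hne : ∃ x y, P x ≠ P y) :
    0 < ∫ x in (0 : ℝ)..c, |iteratedDeriv 2 P x| := by
  have hcont : Continuous fun x => |iteratedDeriv 2 P x| :=
    (hP.continuous_iteratedDeriv 2 le_rfl).abs
  refine intervalIntegral.integral_pos hc hcont.continuousOn (fun x _ => abs_nonneg _) ?_
  by_contra! hzero
  obtain ⟨x, y, hxy⟩ := hne
  refine hxy (eq_of_periodic_of_iteratedDeriv_two_eq_zero hP hper hc (fun t => ?_) x y)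
  obtain ⟨s, hs, hts⟩ := (periodic_iteratedDeriv hper 2).exists_mem_Ico₀ hc t
  rw [hts]
  exact abs_nonpos_iff.1 (hzero s (Ico_subset_Icc_self hs))

namespace CoveringLift

variable {f : UnitAddCircle → UnitAddCircle} {d : ℕ} (E : CoveringLift f d)
  {ν : Measure UnitAddCircle} {ρ ρ' D R : UnitAddCircle → ℝ}

lemma transfer_eq_self (hρ : Continuous ρ) (h0 : ∀ z, 0 ≤ ρ z)
    (hinv : (densityMeasure ρ).map f = densityMeasure ρ) : E.transfer ρ = ρ := by
  rw [E.map_densityMeasure hρ h0] at hinv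
  exact densityMeasure_injective (E.continuous_transfer hρ) hρ (E.transfer_nonneg h0) h0 hinv

lemma noiseAverage_transfer_eq_self [IsFiniteMeasure ν] (hρ : Continuous ρ) (h0 : ∀ z, 0 ≤ ρ z)
    (hinv : (densityMeasure ρ).map f ∗ ν = densityMeasure ρ) :
    noiseAverage ν (E.transfer ρ) = ρ := by
  have hLρ := E.continuous_transfer hρ
  have hL0 := E.transfer_nonneg h0
  rw [E.map_densityMeasure hρ h0, densityMeasure_conv hLρ hL0] at hinv
  exact densityMeasure_injective (continuous_noiseAverage hLρ) hρ (noiseAverage_nonneg hL0) h0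
    hinv

lemma sub_eq_noiseAverage_transfer_sub_add [IsFiniteMeasure ν] (hρ : Continuous ρ)
    (hρ' : Continuous ρ') (hfix : noiseAverage ν (E.transfer ρ) = ρ)
    (hfix' : E.transfer ρ' = ρ') :
    ρ - ρ' = noiseAverage ν (E.transfer (ρ - ρ')) + (noiseAverage ν ρ' - ρ') := by
  rw [transfer_sub, noiseAverage_sub (E.continuous_transfer hρ) (E.continuous_transfer hρ'), hfix,
    hfix', sub_add_sub_cancel]

variable [IsProbabilityMeasure ν]

lemma integral_abs_le_two_mul (hD : Continuous D) (hfix : D = noiseAverage ν (E.transfer D) + R) :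
    ∫ z, |R z| ≤ 2 * ∫ z, |D z| := by
  have hLD := E.continuous_transfer hD
  have hiD : Integrable fun z => |D z| := integrable_of_continuous hD.abs
  have hiALD : Integrable fun z => |noiseAverage ν (E.transfer D) z| :=
    integrable_of_continuous (continuous_noiseAverage hLD).abs
  have hR : ∀ z, R z = D z - noiseAverage ν (E.transfer D) z := fun z =>
    eq_sub_of_add_eq' (congrFun hfix z).symm
  calc ∫ z, |R z| ≤ ∫ z, (|D z| + |noiseAverage ν (E.transfer D) z|) :=
        integral_mono_of_nonneg (.of_forall fun z => abs_nonneg _) (hiD.add hiALD)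
          (.of_forall fun z => by simpa only [hR] using abs_sub _ _)
    _ = (∫ z, |D z|) + ∫ z, |noiseAverage ν (E.transfer D) z| := integral_add hiD hiALD
    _ ≤ (∫ z, |D z|) + ∫ z, |D z| :=
        add_le_add_right
          ((integral_abs_noiseAverage_le hLD).trans (E.integral_abs_transfer_le hD)) _
    _ = 2 * ∫ z, |D z| := (two_mul _).symm

section Contraction

variable {γ δ M C : ℝ≥0} (hG : LipschitzWith γ E.inverse)
  (hG' : LipschitzWith δ (deriv E.inverse)) (hR : LipschitzWith C (circleLift R))
  (hD : LipschitzWith M (circleLift D)) (hint : ∫ z, D z = 0)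
  (hfix : D = noiseAverage ν (E.transfer D) + R)
include hG hG' hR hD hint hfix

lemma lipschitzWith_of_eq_noiseAverage_transfer_add :
    LipschitzWith (d * (δ + γ ^ 2) * M + C) (circleLift D) := by
  have h := (lipschitzWith_noiseAverage (ν := ν) (E.lipschitzWith_transfer hG hG' hD hint)).add hR
  rw [hfix]
  exact h

theorem abs_le_of_eq_noiseAverage_transfer_add (hcontr : d * (δ + γ ^ 2) < 1) (z : UnitAddCircle) :
    |D z| ≤ (C / (1 - d * (δ + γ ^ 2)) : ℝ≥0) := by
  set κ : ℝ≥0 := d * (δ + γ ^ 2) with hκ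
  set s : ℝ≥0 := C / (1 - κ)
  have hs : κ * s + C = s := by
    have hC : (1 - κ) * s = C := mul_div_cancel₀ C (tsub_pos_of_lt hcontr).ne'
    rw [← hC, ← add_mul, add_tsub_cancel_of_le hcontr.le, one_mul]
  -- Feeding a Lipschitz constant back into the equation moves it towards the fixed point `s`.
  have hlip : ∀ n : ℕ, LipschitzWith (κ ^ n * M + s) (circleLift D) := by
    intro n
    induction n with
    | zero => exact hD.weaken (by simp)
    | succ n ih =>
      convert E.lipschitzWith_of_eq_noiseAverage_transfer_add hG hG' hR ih hint hfix using 1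
      rw [← hκ, mul_add, add_assoc, hs, pow_succ', mul_assoc]
  have hlim : Tendsto (fun n : ℕ => ((κ : ℝ) ^ n * M + s)) atTop (𝓝 s) := by
    simpa using ((tendsto_pow_atTop_nhds_zero_of_lt_one κ.2 hcontr).mul_const (M : ℝ)).add_const
      (s : ℝ)
  exact ge_of_tendsto' hlim fun n => by simpa using abs_le_of_integral_eq_zero (hlip n) hint z

end Contraction

end CoveringLift

namespace CoveringLift

variable {f : UnitAddCircle → UnitAddCircle} {d : ℕ} (E : CoveringLift f d)
  {ν : Measure ℝ} [IsProbabilityMeasure ν] {ρ ρ₀ : UnitAddCircle → ℝ} {ρ₀' ρ₀'' ρ₀''' : ℝ → ℝ}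
  {K : ℝ≥0} (h : ∀ x, HasDerivAt (circleLift ρ₀) (ρ₀' x) x)
  (h' : ∀ x, HasDerivAt ρ₀' (ρ₀'' x) x) (h'' : ∀ x, HasDerivAt ρ₀'' (ρ₀''' x) x)
  (hK : ∀ x, |ρ₀''' x| ≤ K)
  (hfix : noiseAverage (circleLaw ν) (E.transfer ρ) = ρ) (hfix₀ : E.transfer ρ₀ = ρ₀)
include h h' h'' hK hfix hfix₀

theorem le_integral_abs_sub (hρ : Continuous ρ) (hν : MemLp id 3 ν) (hmean : ∫ t, t ∂ν = 0) :
    (∫ t, t ^ 2 ∂ν) / 4 * (∫ x in (0 : ℝ)..1, |ρ₀'' x|) - K * (∫ t, |t| ^ 3 ∂ν) / 2 ≤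
      ∫ z, |ρ z - ρ₀ z| := by
  have hρ₀ : Continuous ρ₀ := continuous_of_hasDerivAt_circleLift h
  have hlower := le_integral_abs_noiseAverage_sub h h' h'' hK hν hmean
  have hupper := E.integral_abs_le_two_mul (hρ.sub hρ₀)
    (E.sub_eq_noiseAverage_transfer_sub_add hρ hρ₀ hfix hfix₀)
  simp only [Pi.sub_apply] at hlower hupper
  linarith

theorem integral_abs_sub_le {γ δ M M₀ : ℝ≥0} (hG : LipschitzWith γ E.inverse)
    (hG' : LipschitzWith δ (deriv E.inverse)) (hcontr : d * (δ + γ ^ 2) < 1)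
    (hρ : LipschitzWith M (circleLift ρ)) (hρ₀ : LipschitzWith M₀ (circleLift ρ₀))
    (hmass : ∫ z, ρ z = ∫ z, ρ₀ z) (hν : MemLp id 2 ν) (hmean : ∫ t, t ∂ν = 0) :
    ∫ z, |ρ z - ρ₀ z| ≤ K * (∫ t, t ^ 2 ∂ν) / (1 - d * (δ + γ ^ 2)) := by
  have hc : Continuous ρ := continuous_of_comp_coe hρ.continuous
  have hc₀ : Continuous ρ₀ := continuous_of_comp_coe hρ₀.continuous
  have hint : ∫ z, (ρ - ρ₀) z = 0 := by
    rw [integral_sub' (integrable_of_continuous hc) (integrable_of_continuous hc₀), hmass, sub_self]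
  have hpoint := E.abs_le_of_eq_noiseAverage_transfer_add hG hG'
    (lipschitzWith_noiseAverage_sub h h' h'' hK hν hmean) (hρ.sub hρ₀) hint
    (E.sub_eq_noiseAverage_transfer_sub_add hc hc₀ hfix hfix₀) hcontr
  have hle := integral_mono (μ := volume) (integrable_of_continuous (hc.sub hc₀).abs)
    (integrable_const _) hpoint
  rwa [integral_const, probReal_univ, one_smul, NNReal.coe_div, NNReal.coe_sub hcontr.le,
    NNReal.coe_mul, Real.coe_toNNReal _ (integral_nonneg fun t => sq_nonneg t)] at hle

end CoveringLift

lemma exists_lipschitzWith_of_periodic {P : ℝ → ℝ} (h : ContDiff ℝ 1 P) (hP : P.Periodic 1) :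
    ∃ M, LipschitzWith M P := by
  obtain ⟨M, hM⟩ := exists_abs_iteratedDeriv_le (n := 1) h hP
  refine ⟨M, lipschitzWith_of_nnnorm_deriv_le (h.differentiable one_ne_zero) fun x => ?_⟩
  simpa only [iteratedDeriv_one, ← NNReal.coe_le_coe, coe_nnnorm, Real.norm_eq_abs] using hM x

theorem CoveringLift.exists_integral_abs_sub_bounds {f : UnitAddCircle → UnitAddCircle} {d : ℕ}
    (E : CoveringLift f d) {γ δ : ℝ≥0} (hG : LipschitzWith γ E.inverse)
    (hG' : LipschitzWith δ (deriv E.inverse)) (hcontr : d * (δ + γ ^ 2) < 1)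
    {ρ₀ : UnitAddCircle → ℝ} (hρ₀ : ContDiff ℝ 3 (circleLift ρ₀)) (h0 : ∀ z, 0 ≤ ρ₀ z)
    (hinv₀ : (densityMeasure ρ₀).map f = densityMeasure ρ₀) :
    ∃ K : ℝ≥0, ∀ (ν : Measure ℝ) [IsProbabilityMeasure ν], MemLp id 3 ν → ∫ t, t ∂ν = 0 →
      ∀ ρ : UnitAddCircle → ℝ, (∃ M, LipschitzWith M (circleLift ρ)) → (∀ z, 0 ≤ ρ z) →
      ∫ z, ρ z = ∫ z, ρ₀ z → (densityMeasure ρ).map f ∗ circleLaw ν = densityMeasure ρ →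
      (∫ t, t ^ 2 ∂ν) / 4 * (∫ x in (0 : ℝ)..1, |iteratedDeriv 2 (circleLift ρ₀) x|) -
          K * (∫ t, |t| ^ 3 ∂ν) / 2 ≤ ∫ z, |ρ z - ρ₀ z| ∧
        ∫ z, |ρ z - ρ₀ z| ≤ K * (∫ t, t ^ 2 ∂ν) / (1 - d * (δ + γ ^ 2)) := by
  have h : ∀ x, HasDerivAt (circleLift ρ₀) (iteratedDeriv 1 (circleLift ρ₀) x) x := by
    simpa only [iteratedDeriv_zero, zero_add] using
      hasDerivAt_iteratedDeriv (m := 0) hρ₀ (by norm_num)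
  have h' := hasDerivAt_iteratedDeriv (m := 1) hρ₀ (by norm_num)
  have h'' := hasDerivAt_iteratedDeriv (m := 2) hρ₀ (by norm_num)
  obtain ⟨K, hK⟩ := exists_abs_iteratedDeriv_le (n := 3) hρ₀ (periodic_circleLift ρ₀)
  obtain ⟨M₀, hM₀⟩ := exists_lipschitzWith_of_periodic (hρ₀.of_le (by norm_num))
    (periodic_circleLift ρ₀)
  have hfix₀ := E.transfer_eq_self (continuous_of_comp_coe hρ₀.continuous) h0 hinv₀
  refine ⟨K, fun ν _ hν hmean ρ ⟨M, hM⟩ hpos hmass hinv => ?_⟩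
  have hρ : Continuous ρ := continuous_of_comp_coe hM.continuous
  have hfix := E.noiseAverage_transfer_eq_self hρ hpos hinv
  exact ⟨E.le_integral_abs_sub h h' h'' hK hfix hfix₀ hρ hν hmean,
    E.integral_abs_sub_le h h' h'' hK hfix hfix₀ hG hG' hcontr hM hM₀ hmass
      (hν.mono_exponent (by norm_num)) hmean⟩

section ScaledNoise

variable {ν : Measure ℝ} (ε : ℝ)

lemma isProbabilityMeasure_map_const_mul [IsProbabilityMeasure ν] :
    IsProbabilityMeasure (ν.map fun t => ε * t) :=
  Measure.isProbabilityMeasure_map (by fun_prop)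

lemma memLp_id_map_const_mul {p : ENNReal} (hν : MemLp id p ν) :
    MemLp id p (ν.map fun t => ε * t) :=
  (memLp_map_measure_iff aestronglyMeasurable_id (by fun_prop)).2 (hν.const_mul ε)

lemma integral_pow_map_const_mul (n : ℕ) :
    ∫ t, t ^ n ∂(ν.map fun t => ε * t) = ε ^ n * ∫ t, t ^ n ∂ν := by
  rw [integral_map (by fun_prop) (by fun_prop)]
  simp only [mul_pow, integral_const_mul]

lemma integral_abs_pow_map_const_mul (n : ℕ) :
    ∫ t, |t| ^ n ∂(ν.map fun t => ε * t) = |ε| ^ n * ∫ t, |t| ^ n ∂ν := by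
  rw [integral_map (by fun_prop) (by fun_prop)]
  simp only [abs_mul, mul_pow, integral_const_mul]

end ScaledNoise

lemma exists_circleLift_ne {ρ : UnitAddCircle → ℝ} (hne : ∃ u v, ρ u ≠ ρ v) :
    ∃ x y, circleLift ρ x ≠ circleLift ρ y := by
  obtain ⟨u, v, huv⟩ := hne
  obtain ⟨x, rfl⟩ := exists_coe_eq u
  obtain ⟨y, rfl⟩ := exists_coe_eq v
  exact ⟨x, y, huv⟩

theorem stmt11_general {f : UnitAddCircle → UnitAddCircle} {F : ℝ → ℝ} {d : ℕ} {lam Λ : ℝ≥0}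
    (hf : ∀ x : ℝ, f x = F x) (hF : ContDiff ℝ 1 F) (hdeg : ∀ x, F (x + 1) = F x + d)
    (hlam : 0 < lam) (hexp : ∀ x, lam ≤ deriv F x) (hlip : LipschitzWith Λ (deriv F))
    (hcontr : d * (Λ / lam ^ 3 + lam⁻¹ ^ 2) < 1) {ν : Measure ℝ} [IsProbabilityMeasure ν]
    (hν : MemLp id 3 ν) (hmean : ∫ t, t ∂ν = 0) (hvar : 0 < ∫ t, t ^ 2 ∂ν)
    {ρ₀ : UnitAddCircle → ℝ} (hρ₀ : ContDiff ℝ 3 (circleLift ρ₀)) (hne : ∃ u v, ρ₀ u ≠ ρ₀ v)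
    (h0 : ∀ z, 0 ≤ ρ₀ z) (hmass₀ : ∫ z, ρ₀ z = 1)
    (hinv₀ : (densityMeasure ρ₀).map f = densityMeasure ρ₀) :
    ∃ c₁ > (0 : ℝ), ∃ c₂ > (0 : ℝ), ∃ ε₁ > (0 : ℝ), ∀ ε ∈ Ioo 0 ε₁, ∀ ρ : UnitAddCircle → ℝ,
      (∃ M, LipschitzWith M (circleLift ρ)) → (∀ z, 0 ≤ ρ z) → ∫ z, ρ z = 1 →
      (densityMeasure ρ).map f ∗ circleLaw (ν.map fun t => ε * t) = densityMeasure ρ →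
      c₁ * ε ^ 2 ≤ ∫ z, |ρ z - ρ₀ z| ∧ ∫ z, |ρ z - ρ₀ z| ≤ c₂ * ε ^ 2 := by
  obtain ⟨E, hG, hG'⟩ := exists_coveringLift hf hF hdeg hlam hexp hlip
  obtain ⟨K, hK⟩ := E.exists_integral_abs_sub_bounds hG hG' hcontr hρ₀ h0 hinv₀
  have hS := integral_abs_iteratedDeriv_two_pos (hρ₀.of_le (by norm_num))
    (periodic_circleLift ρ₀) one_pos (exists_circleLift_ne hne)
  set S := ∫ x in (0 : ℝ)..1, |iteratedDeriv 2 (circleLift ρ₀) x|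
  set v := ∫ t, t ^ 2 ∂ν
  set m := ∫ t, |t| ^ 3 ∂ν
  set κ : ℝ≥0 := d * (Λ / lam ^ 3 + lam⁻¹ ^ 2)
  have : 0 ≤ m := integral_nonneg fun t => by positivity
  have : 0 < (1 - κ : ℝ) := sub_pos.2 hcontr
  refine ⟨v * S / 8, by positivity, K * v / (1 - κ) + 1, by positivity,
    v * S / (4 * (K * m + 1)), by positivity, ?_⟩
  rintro ε ⟨hε, hε₁⟩ ρ hρ hpos hmass hinv
  have := isProbabilityMeasure_map_const_mul (ν := ν) ε
  have hmeanε : ∫ t, t ∂(ν.map fun t => ε * t) = 0 := by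
    simpa [hmean] using integral_pow_map_const_mul (ν := ν) ε 1
  obtain ⟨hlower, hupper⟩ := hK _ (memLp_id_map_const_mul ε hν) hmeanε ρ hρ hpos
    (hmass.trans hmass₀.symm) hinv
  rw [integral_pow_map_const_mul] at hlower hupper
  rw [integral_abs_pow_map_const_mul, abs_of_pos hε] at hlower
  have hsmall : ε * (K * m) ≤ v * S / 4 := by
    rw [lt_div_iff₀ (by positivity)] at hε₁
    linarith
  constructor
  · calc v * S / 8 * ε ^ 2 = ε ^ 2 * v / 4 * S - ε ^ 2 / 2 * (v * S / 4) := by ring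
      _ ≤ ε ^ 2 * v / 4 * S - ε ^ 2 / 2 * (ε * (K * m)) := by gcongr
      _ = ε ^ 2 * v / 4 * S - K * (ε ^ 3 * m) / 2 := by ring
      _ ≤ ∫ z, |ρ z - ρ₀ z| := hlower
  · calc ∫ z, |ρ z - ρ₀ z| ≤ K * (ε ^ 2 * v) / (1 - κ) := hupper
      _ = K * v / (1 - κ) * ε ^ 2 := by ring
      _ ≤ (K * v / (1 - κ) + 1) * ε ^ 2 := by gcongr; exact (lt_add_one _).le

/-! ### The circle map and the uniform noise -/

section SineLift

/-- The lift `F_a` to the line of the degree `2` circle map `f`. -/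
noncomputable def sineLift (a x : ℝ) : ℝ := 2 * x + a * Real.sin (2 * Real.pi * x)

lemma contDiff_sineLift (a : ℝ) : ContDiff ℝ 1 (sineLift a) := by
  unfold sineLift
  fun_prop

lemma sineLift_add_one (a x : ℝ) : sineLift a (x + 1) = sineLift a x + 2 := by
  rw [sineLift, sineLift, mul_add (2 * Real.pi), mul_one, Real.sin_add_two_pi]
  ring

lemma deriv_sineLift (a : ℝ) :
    deriv (sineLift a) = fun x => 2 + a * (Real.cos (2 * Real.pi * x) * (2 * Real.pi)) := by
  funext x
  exact ((hasDerivAt_const_mul 2).add ((hasDerivAt_const_mul (2 * Real.pi)).sin.const_mul a)).deriv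

lemma le_deriv_sineLift (a x : ℝ) : 2 - 2 * Real.pi * |a| ≤ deriv (sineLift a) x := by
  have := Real.pi_pos
  have hbound : |a * (Real.cos (2 * Real.pi * x) * (2 * Real.pi))| ≤ 2 * Real.pi * |a| := by
    calc |a * (Real.cos (2 * Real.pi * x) * (2 * Real.pi))|
        = |Real.cos (2 * Real.pi * x)| * (2 * Real.pi * |a|) := by
          rw [abs_mul, abs_mul, abs_of_pos Real.two_pi_pos]
          ring
      _ ≤ 2 * Real.pi * |a| := mul_le_of_le_one_left (by positivity) (Real.abs_cos_le_one _)
  rw [deriv_sineLift]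
  linarith [(abs_le.1 hbound).1]

lemma lipschitzWith_deriv_sineLift (a : ℝ) :
    LipschitzWith (4 * NNReal.pi ^ 2 * ‖a‖₊) (deriv (sineLift a)) := by
  rw [deriv_sineLift]
  refine LipschitzWith.of_dist_le_mul fun x y => ?_
  have hcos := Real.lipschitzWith_cos.dist_le_mul (2 * Real.pi * x) (2 * Real.pi * y)
  rw [Real.dist_eq, Real.dist_eq, ← mul_sub, abs_mul, abs_of_pos Real.two_pi_pos,
    NNReal.coe_one, one_mul] at hcos
  rw [Real.dist_eq, Real.dist_eq, add_sub_add_left_eq_sub, ← mul_sub, ← sub_mul, abs_mul, abs_mul,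
    abs_of_pos Real.two_pi_pos]
  calc |a| * (|Real.cos (2 * Real.pi * x) - Real.cos (2 * Real.pi * y)| * (2 * Real.pi))
      ≤ |a| * (2 * Real.pi * |x - y| * (2 * Real.pi)) := by have := Real.pi_pos; gcongr
    _ = (4 * NNReal.pi ^ 2 * ‖a‖₊ : ℝ≥0) * |x - y| := by
        push_cast
        rw [Real.norm_eq_abs, NNReal.coe_real_pi]
        ring

-- With these constants the contraction factor `2 (Λ / λ ^ 3 + 1 / λ ^ 2)` is about `0.67`.
lemma le_deriv_and_lipschitzWith_deriv_sineLift {a : ℝ} (ha : |a| ≤ 1 / 100) :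
    (∀ x, ((19 / 10 : ℝ≥0) : ℝ) ≤ deriv (sineLift a) x) ∧
      LipschitzWith (4 / 10) (deriv (sineLift a)) := by
  have hπ := Real.pi_lt_d2
  have hπ' := Real.pi_pos
  constructor
  · intro x
    refine le_trans ?_ (le_deriv_sineLift a x)
    push_cast
    nlinarith [abs_nonneg a]
  · refine (lipschitzWith_deriv_sineLift a).weaken ?_
    rw [← NNReal.coe_le_coe]
    push_cast
    rw [NNReal.coe_real_pi, Real.norm_eq_abs]
    calc 4 * Real.pi ^ 2 * |a| ≤ 4 * 3.15 ^ 2 * (1 / 100) := by gcongr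
      _ ≤ 4 / 10 := by norm_num

end SineLift

section UniformNoise

/-- The uniform law on `[-1, 1]`. -/
noncomputable def unitNoise : Measure ℝ := ProbabilityTheory.cond volume (Icc (-1) 1)

lemma unitNoise_eq : unitNoise = (ENNReal.ofReal 2)⁻¹ • volume.restrict (Icc (-1) 1) := by
  rw [unitNoise, ProbabilityTheory.cond, Real.volume_Icc]
  norm_num

instance isProbabilityMeasure_unitNoise : IsProbabilityMeasure unitNoise :=
  ProbabilityTheory.cond_isProbabilityMeasure_of_finite (by simp) (by simp)

lemma memLp_id_unitNoise (p : ENNReal) : MemLp id p unitNoise :=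
  memLp_of_bounded (ProbabilityTheory.ae_cond_mem measurableSet_Icc) aestronglyMeasurable_id p

lemma integral_unitNoise (g : ℝ → ℝ) : ∫ t, g t ∂unitNoise = (∫ t in (-1)..1, g t) / 2 := by
  rw [unitNoise_eq, integral_smul_measure, integral_Icc_eq_integral_Ioc,
    ← intervalIntegral.integral_of_le (by norm_num), ENNReal.toReal_inv,
    ENNReal.toReal_ofReal zero_le_two, smul_eq_mul, inv_mul_eq_div]

lemma map_const_mul_unitNoise {ε : ℝ} (hε : 0 < ε) :
    unitNoise.map (fun t => ε * t) =
      (ENNReal.ofReal (2 * ε))⁻¹ • volume.restrict (Icc (-ε) ε) := by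
  have hpre : (fun t => ε * t) ⁻¹' Icc (-ε) ε = Icc (-1) 1 := by
    rw [preimage_const_mul_Icc₀ _ _ hε, neg_div, div_self hε.ne']
  rw [unitNoise_eq, Measure.map_smul, ← hpre,
    ← Measure.restrict_map (by fun_prop) measurableSet_Icc, Real.map_volume_mul_left hε.ne',
    Measure.restrict_smul, smul_smul, abs_of_pos (inv_pos.2 hε), ENNReal.ofReal_inv_of_pos hε,
    ENNReal.ofReal_mul zero_le_two, ENNReal.mul_inv (by simp) (by simp)]

end UniformNoise

/-- Main rigorous result of Section 2.1: for sufficiently small `a ∈ (0, 1/(2π))`,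
if `f` is the circle map induced by `F_a(x) = 2x + a sin(2πx)`, `ρ₀` a nonconstant `C³`
invariant probability density of `f` on `ℝ/ℤ`, then there are `c₁, c₂, ε₁ > 0` such that
for `0 < ε < ε₁` every `C¹` invariant probability density `ρ_ε` of the noisy dynamics
(pushforward by `f` followed by convolution with the projected uniform measure on `[−ε,ε]`)
satisfies `c₁ ε² ≤ ∫ |ρ_ε − ρ₀| ≤ c₂ ε²`. -/
theorem stmt11 :
    ∃ a₀ ∈ Set.Ioo (0:ℝ) (1/(2*Real.pi)), ∀ a ∈ Set.Ioo (0:ℝ) a₀,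
    ∀ f : AddCircle (1:ℝ) → AddCircle (1:ℝ),
      (∀ x : ℝ, f (x : AddCircle (1:ℝ)) =
        ((2*x + a*Real.sin (2*Real.pi*x) : ℝ) : AddCircle (1:ℝ))) →
    ∀ ρ₀ : AddCircle (1:ℝ) → ℝ, ∀ P₀ : ℝ → ℝ,
      ContDiff ℝ 3 P₀ → Function.Periodic P₀ 1 →
      (∀ x : ℝ, ρ₀ (x : AddCircle (1:ℝ)) = P₀ x) →
      (∃ u v : AddCircle (1:ℝ), ρ₀ u ≠ ρ₀ v) →
      (∀ z : AddCircle (1:ℝ), 0 ≤ ρ₀ z) →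
      (∫ z : AddCircle (1:ℝ), ρ₀ z = 1) →
      (Measure.map f (volume.withDensity (fun z => ENNReal.ofReal (ρ₀ z))) =
        volume.withDensity (fun z => ENNReal.ofReal (ρ₀ z))) →
    ∃ c₁ > (0:ℝ), ∃ c₂ > (0:ℝ), ∃ ε₁ > (0:ℝ), ∀ ε ∈ Set.Ioo (0:ℝ) ε₁,
      ∀ ρε : AddCircle (1:ℝ) → ℝ, ∀ Pε : ℝ → ℝ,
        ContDiff ℝ 1 Pε → Function.Periodic Pε 1 →
        (∀ x : ℝ, ρε (x : AddCircle (1:ℝ)) = Pε x) →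
        (∀ z : AddCircle (1:ℝ), 0 ≤ ρε z) →
        (∫ z : AddCircle (1:ℝ), ρε z = 1) →
        -- invariance of ρε under push-forward by f followed by convolution with the
        -- noise measure ν_ε (the projection to ℝ/ℤ of the uniform measure on [−ε, ε])
        (Measure.map (fun p : AddCircle (1:ℝ) × AddCircle (1:ℝ) => p.1 + p.2)
            ((Measure.map f (volume.withDensity (fun z => ENNReal.ofReal (ρε z)))).prod
              (Measure.map (fun x : ℝ => (x : AddCircle (1:ℝ)))
                ((ENNReal.ofReal (2*ε))⁻¹ • volume.restrict (Set.Icc (-ε) ε)))) =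
          volume.withDensity (fun z => ENNReal.ofReal (ρε z))) →
        c₁ * ε^2 ≤ (∫ z : AddCircle (1:ℝ), |ρε z - ρ₀ z|) ∧
          (∫ z : AddCircle (1:ℝ), |ρε z - ρ₀ z|) ≤ c₂ * ε^2 := by
  refine ⟨1 / 100, ⟨by norm_num, ?_⟩, fun a ha f hf ρ₀ P₀ hP₀ _ hρP₀ hne h0 hmass₀ hinv₀ => ?_⟩
  · rw [lt_div_iff₀ (by positivity)]
    linarith [Real.pi_lt_four]
  obtain rfl : circleLift ρ₀ = P₀ := funext hρP₀
  obtain ⟨hexp, hlip⟩ :=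
    le_deriv_and_lipschitzWith_deriv_sineLift ((abs_of_pos ha.1).trans_le ha.2.le)
  obtain ⟨c₁, hc₁, c₂, hc₂, ε₁, hε₁, hbound⟩ := stmt11_general (d := 2) hf (contDiff_sineLift a)
    (sineLift_add_one a) (by norm_num) hexp hlip (by norm_num) (memLp_id_unitNoise 3)
    (by simp [integral_unitNoise]) (by norm_num [integral_unitNoise]) hP₀ hne h0 hmass₀ hinv₀
  refine ⟨c₁, hc₁, c₂, hc₂, ε₁, hε₁, fun ε hε ρε Pε hPε hper hρPε hpos hmass hinv => ?_⟩
  obtain rfl : circleLift ρε = Pε := funext hρPε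
  refine hbound ε hε ρε (exists_lipschitzWith_of_periodic hPε hper) hpos hmass ?_
  rw [map_const_mul_unitNoise hε.1]
  exact hinv
end

section
/- Let ρ₀ : ℝ → ℝ be the 1-periodic function with ρ₀(x) = 2/3 for x ∈ [0, 1/2] and ρ₀(x) = 4/3 for x ∈ (1/2, 1), and for ε > 0 define (G_ε ρ₀)(x) = (1/(2ε)) ∫_{x−ε}^{x+ε} ρ₀(y) dy. Then for every ε with 0 < ε < 1/4, ∫₀¹ |(G_ε ρ₀)(x) − ρ₀(x)| dx = (2/3) ε. -/
/-!
On a plateau of a step function, the moving average departs from the plateau value only within `ε`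
of an adjacent jump, where the graph of the deviation is a straight line of slope `|jump| / (2ε)`
over an interval of length `ε`. Each side of a jump therefore carries a triangle of area
`|jump| · ε / 4`, and one period of a two-valued periodic step function contains two jumps, hence
four such triangles.
-/

open MeasureTheory Set

/-- The averaging operator `G_ε`: `movingAverage ε f` is the convolution of `f` with the uniform
probability density on `[-ε, ε]`, written as a mean over `[x - ε, x + ε]`. -/
noncomputable def movingAverage (ε : ℝ) (f : ℝ → ℝ) (x : ℝ) : ℝ :=
  (1 / (2 * ε)) * ∫ y in (x - ε)..(x + ε), f y

theorem intervalIntegrable_of_eqOn_Ioo {f g : ℝ → ℝ} {a b : ℝ} (hab : a ≤ b)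
    (hg : IntervalIntegrable g volume a b) (h : EqOn f g (Ioo a b)) :
    IntervalIntegrable f volume a b :=
  hg.congr_uIoo (by simpa only [uIoo_of_le hab] using h.symm)

theorem integral_eq_of_const_on_three_Ioo {f : ℝ → ℝ} {s a b t r p q : ℝ}
    (hsa : s ≤ a) (hab : a ≤ b) (hbt : b ≤ t) (hr : EqOn f (fun _ ↦ r) (Ioo s a))
    (hp : EqOn f (fun _ ↦ p) (Ioo a b)) (hq : EqOn f (fun _ ↦ q) (Ioo b t)) :
    ∫ y in s..t, f y = r * (a - s) + p * (b - a) + q * (t - b) := by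
  have hir := intervalIntegrable_of_eqOn_Ioo hsa intervalIntegrable_const hr
  have hip := intervalIntegrable_of_eqOn_Ioo hab intervalIntegrable_const hp
  have hiq := intervalIntegrable_of_eqOn_Ioo hbt intervalIntegrable_const hq
  rw [← intervalIntegral.integral_add_adjacent_intervals (hir.trans hip) hiq,
    ← intervalIntegral.integral_add_adjacent_intervals hir hip,
    intervalIntegral.integral_congr_Ioo_of_le hsa hr,
    intervalIntegral.integral_congr_Ioo_of_le hab hp,
    intervalIntegral.integral_congr_Ioo_of_le hbt hq]
  simp only [intervalIntegral.integral_const, smul_eq_mul, mul_comm]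

theorem integral_max_zero_sub {ε L : ℝ} (hε : 0 ≤ ε) (hL : ε ≤ L) :
    ∫ t in (0 : ℝ)..L, max 0 (ε - t) = ε ^ 2 / 2 := by
  have hint (a b : ℝ) : IntervalIntegrable (fun t ↦ max 0 (ε - t)) volume a b :=
    Continuous.intervalIntegrable (by fun_prop) a b
  have hleft : ∫ t in (0 : ℝ)..ε, max 0 (ε - t) = ∫ t in (0 : ℝ)..ε, (ε - t) :=
    intervalIntegral.integral_congr_Ioo_of_le hε fun _ ht ↦ max_eq_right (sub_nonneg.2 ht.2.le)
  have hright : ∫ t in ε..L, max 0 (ε - t) = ∫ _ in ε..L, (0 : ℝ) :=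
    intervalIntegral.integral_congr_Ioo_of_le hL fun _ ht ↦ max_eq_left (sub_nonpos.2 ht.1.le)
  rw [← intervalIntegral.integral_add_adjacent_intervals (hint 0 ε) (hint ε L), hleft, hright,
    intervalIntegral.integral_comp_sub_left (fun t ↦ t), integral_id,
    intervalIntegral.integral_zero]
  ring

section Plateau

variable {f : ℝ → ℝ} {ε a b r p q : ℝ}

theorem movingAverage_sub_eq_of_plateau (hε : 0 < ε) (hr : EqOn f (fun _ ↦ r) (Ioo (a - ε) a))
    (hp : EqOn f (fun _ ↦ p) (Ioo a b)) (hq : EqOn f (fun _ ↦ q) (Ioo b (b + ε)))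
    {x : ℝ} (hx : x ∈ Icc a b) :
    movingAverage ε f x - p =
      ((r - p) * max 0 (ε - (x - a)) + (q - p) * max 0 (ε - (b - x))) / (2 * ε) := by
  obtain ⟨hax, hxb⟩ := hx
  -- The part of the plateau seen from `x` is `(max a (x - ε), min b (x + ε))`.
  have hwindow := integral_eq_of_const_on_three_Ioo
    (le_max_right a (x - ε)) ((max_le hax (by linarith)).trans (le_min hxb (by linarith)))
    (min_le_right b (x + ε))
    (hr.mono fun y hy ↦ by grind) (hp.mono fun y hy ↦ by grind) (hq.mono fun y hy ↦ by grind)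
  have hleft : max a (x - ε) = x - ε + max 0 (ε - (x - a)) := by grind
  have hright : min b (x + ε) = x + ε - max 0 (ε - (b - x)) := by grind
  rw [movingAverage, hwindow, hleft, hright]
  field_simp
  ring

theorem abs_movingAverage_sub_eqOn_of_plateau (hε : 0 < ε) (hab : 2 * ε ≤ b - a)
    (hr : EqOn f (fun _ ↦ r) (Ioo (a - ε) a)) (hp : EqOn f (fun _ ↦ p) (Ioo a b))
    (hq : EqOn f (fun _ ↦ q) (Ioo b (b + ε))) :
    EqOn (fun x ↦ |movingAverage ε f x - f x|)
      (fun x ↦ |r - p| / (2 * ε) * max 0 (ε - (x - a)) + |q - p| / (2 * ε) * max 0 (ε - (b - x)))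
      (Ioo a b) := by
  intro x hx
  have hdisjoint : max 0 (ε - (x - a)) = 0 ∨ max 0 (ε - (b - x)) = 0 := by grind
  have habs : |(r - p) * max 0 (ε - (x - a)) + (q - p) * max 0 (ε - (b - x))| =
      |r - p| * max 0 (ε - (x - a)) + |q - p| * max 0 (ε - (b - x)) := by
    rcases hdisjoint with h | h <;> simp [h, abs_mul, abs_of_nonneg]
  dsimp only
  rw [hp hx, movingAverage_sub_eq_of_plateau hε hr hp hq (Ioo_subset_Icc_self hx), abs_div,
    habs, abs_of_pos (show 0 < 2 * ε by positivity)]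
  ring

theorem intervalIntegrable_abs_movingAverage_sub_of_plateau (hε : 0 < ε) (hab : 2 * ε ≤ b - a)
    (hr : EqOn f (fun _ ↦ r) (Ioo (a - ε) a)) (hp : EqOn f (fun _ ↦ p) (Ioo a b))
    (hq : EqOn f (fun _ ↦ q) (Ioo b (b + ε))) :
    IntervalIntegrable (fun x ↦ |movingAverage ε f x - f x|) volume a b :=
  intervalIntegrable_of_eqOn_Ioo (by linarith) (Continuous.intervalIntegrable (by fun_prop) a b)
    (abs_movingAverage_sub_eqOn_of_plateau hε hab hr hp hq)

theorem integral_abs_movingAverage_sub_of_plateau (hε : 0 < ε) (hab : 2 * ε ≤ b - a)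
    (hr : EqOn f (fun _ ↦ r) (Ioo (a - ε) a)) (hp : EqOn f (fun _ ↦ p) (Ioo a b))
    (hq : EqOn f (fun _ ↦ q) (Ioo b (b + ε))) :
    ∫ x in a..b, |movingAverage ε f x - f x| = (|r - p| + |q - p|) * ε / 4 := by
  have htriangle := integral_max_zero_sub hε.le (show ε ≤ b - a by linarith)
  have hleft : ∫ x in a..b, max 0 (ε - (x - a)) = ε ^ 2 / 2 := by
    rw [intervalIntegral.integral_comp_sub_right (fun t ↦ max 0 (ε - t)), sub_self, htriangle]
  have hright : ∫ x in a..b, max 0 (ε - (b - x)) = ε ^ 2 / 2 := by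
    rw [intervalIntegral.integral_comp_sub_left (fun t ↦ max 0 (ε - t)), sub_self, htriangle]
  rw [intervalIntegral.integral_congr_Ioo_of_le (by linarith)
      (abs_movingAverage_sub_eqOn_of_plateau hε hab hr hp hq),
    intervalIntegral.integral_add (Continuous.intervalIntegrable (by fun_prop) a b)
      (Continuous.intervalIntegrable (by fun_prop) a b),
    intervalIntegral.integral_const_mul, intervalIntegral.integral_const_mul, hleft, hright]
  field_simp
  ring

end Plateau

theorem stmt16_general {ρ : ℝ → ℝ} {ε c T p q : ℝ} (hper : Function.Periodic ρ T)
    (hp : EqOn ρ (fun _ ↦ p) (Ioo 0 c)) (hq : EqOn ρ (fun _ ↦ q) (Ioo c T))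
    (hε : 0 < ε) (hc : 2 * ε ≤ c) (hT : 2 * ε ≤ T - c) :
    ∫ x in (0 : ℝ)..T, |movingAverage ε ρ x - ρ x| = |q - p| * ε := by
  have hbefore : EqOn ρ (fun _ ↦ q) (Ioo (0 - ε) 0) := fun y hy ↦
    (hper y).symm.trans (hq ⟨by linarith [hy.1], by linarith [hy.2]⟩)
  have hafter : EqOn ρ (fun _ ↦ p) (Ioo T (T + ε)) := fun y hy ↦
    (hper.sub_eq y).symm.trans (hp ⟨by linarith [hy.1], by linarith [hy.2]⟩)
  have hp_left : EqOn ρ (fun _ ↦ p) (Ioo (c - ε) c) :=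
    hp.mono (Ioo_subset_Ioo_left (by linarith))
  have hq_right : EqOn ρ (fun _ ↦ q) (Ioo c (c + ε)) :=
    hq.mono (Ioo_subset_Ioo_right (by linarith))
  have hc' : 2 * ε ≤ c - 0 := by rwa [sub_zero]
  rw [← intervalIntegral.integral_add_adjacent_intervals
      (intervalIntegrable_abs_movingAverage_sub_of_plateau hε hc' hbefore hp hq_right)
      (intervalIntegrable_abs_movingAverage_sub_of_plateau hε hT hp_left hq hafter),
    integral_abs_movingAverage_sub_of_plateau hε hc' hbefore hp hq_right,
    integral_abs_movingAverage_sub_of_plateau hε hT hp_left hq hafter, abs_sub_comm p q]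
  ring

/-- For the 1-periodic piecewise-constant density `ρ₀` (`2/3` on `[0,1/2]`, `4/3` on
`(1/2,1)`) and `0 < ε < 1/4`, the smearing of the jumps by the averaging operator `G_ε`
gives exactly `‖G_ε ρ₀ − ρ₀‖₁ = (2/3) ε` over one period. -/
theorem stmt16 (ρ₀ : ℝ → ℝ) (hper : Function.Periodic ρ₀ 1)
    (hval : ∀ x ∈ Set.Ico (0:ℝ) 1, ρ₀ x = if x ≤ 1/2 then 2/3 else 4/3)
    (ε : ℝ) (hε : ε ∈ Set.Ioo (0:ℝ) (1/4)) :
    (∫ x in (0:ℝ)..1, |((1/(2*ε)) * ∫ y in (x-ε)..(x+ε), ρ₀ y) - ρ₀ x|) = (2/3) * ε := by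
  obtain ⟨hε0, hε4⟩ := hε
  have hlow : EqOn ρ₀ (fun _ ↦ 2 / 3) (Ioo 0 (1 / 2)) := fun x hx ↦
    (hval x ⟨hx.1.le, by linarith [hx.2]⟩).trans (if_pos hx.2.le)
  have hhigh : EqOn ρ₀ (fun _ ↦ 4 / 3) (Ioo (1 / 2) 1) := fun x hx ↦
    (hval x ⟨by linarith [hx.1], hx.2⟩).trans (if_neg hx.1.not_ge)
  exact (stmt16_general hper hlow hhigh hε0 (by linarith) (by linarith)).trans
    (by norm_num)
end
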